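/- Let u, w ∈ [1,γ] \ {1} and let A, B ∈ Γ₊. If ⟨u⟩·A = ⟨w⟩·B in Γ₊, then there exist e, f ∈ [1,γ] and C ∈ Γ₊ such that A = ⟨e⟩·C and B = ⟨f⟩·C in Γ₊ (where ⟨1⟩ is interpreted as the identity of Γ₊), ue = wf, and ue is a least upper bound of {u,w} in ([1,γ],≤). -/

import Mathlib

/-! The interval `[1, γ]` has joins, and these joins control the word problem in the positive
monoid.

**Joins.** The Tits representation realizes `W` on `B → ℝ` by isometries of a scalar product
obtained by averaging. By Carter's lemma (`rlen_eq_finrank_movedSpace`) the reflection length of `w`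
is the dimension of its moved space, the image of `w - 1`, and within an interval `[1, c]` the
reflection order is inclusion of moved spaces (`rle_of_movedSpace_le`). Let `c` be the product of a
word `l` of distinct simple reflections. For a nonnegative vector `x` with support in `l` there is
`u₀ ≤ c` whose moved space contains `x` and lies in the moved space of every `u ≤ c` for which `x`
is in the cone of positive roots of that space (`hasCarrier_wordProd`). No classification is needed:
with `l = i :: l'`, either `s_i x` has a negative `i`-th coordinate, which forces the root of `s_i`
into every relevant moved space and reduces the claim to `l'`, or `s_i x` is again nonnegative and
`l` may be rotated. Rotation cannot go on forever, because the sum of the vectors `c⁻ᵐ x` would be a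
nonzero nonnegative fixed vector of `c`. For a generic `x` in the cone of positive roots of the
intersection of the moved spaces of `u` and `w`, the element `u₀` is the meet of `u` and `w`
(`exists_meet_wordProd`). The anti-automorphism `x ↦ x⁻¹ γ` of `[1, γ]` turns meets into joins.

**Monoid.** The relations are homogeneous for reflection length, so one may induct on the weight of
`⟨u⟩A = ⟨w⟩D`, and within one weight on the derivation of the equality of words
(`WordsComplete.of_conGenRel`). Only transitivity needs an argument (`Completes.trans`): if
`⟨u⟩A = ⟨x⟩D = ⟨w⟩E`, the two factorizations of the lighter element `D` given by the two halves are
compared by the induction hypothesis. This produces `z ≤ γ` above `u`, `x` and `w` with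
`A = ⟨u⁻¹z⟩C` and `E = ⟨w⁻¹z⟩C`. The join `p` of `u` and `w` lies below `z`, hence
`⟨u⁻¹z⟩ = ⟨u⁻¹p⟩⟨p⁻¹z⟩`, and the same holds for `w`. -/

variable {B : Type*} {W : Type*} [Group W] {M : CoxeterMatrix B}

/-- The reflection length of `w`: the least `k` such that `w` is a product of `k`
reflections (conjugates of simple reflections). -/
noncomputable def rlen (cs : CoxeterSystem M W) (w : W) : ℕ :=
  sInf {k | ∃ l : List W, (∀ t ∈ l, cs.IsReflection t) ∧ l.length = k ∧ l.prod = w}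

/-- The reflection (absolute) order on `W`: `u ≤ w` iff `ℓ(w) = ℓ(u) + ℓ(u⁻¹w)`. -/
def rle (cs : CoxeterSystem M W) (u w : W) : Prop :=
  rlen cs w = rlen cs u + rlen cs (u⁻¹ * w)

/-- A Coxeter element: a conjugate of a product of all the simple reflections,
each occurring exactly once, in some order. -/
def IsCoxeterElement [Fintype B] (cs : CoxeterSystem M W) (γ : W) : Prop :=
  ∃ (v : W) (l : List B), l.Nodup ∧ (∀ i : B, i ∈ l) ∧ γ = v * cs.wordProd l * v⁻¹

/-- `p` is a least upper bound of the set `s` within the interval `[1,γ]`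
under the reflection order. -/
def IsIntervalLUB (cs : CoxeterSystem M W) (γ : W) (s : Set W) (p : W) : Prop :=
  rle cs p γ ∧ (∀ x ∈ s, rle cs x p) ∧
    ∀ r, rle cs r γ → (∀ x ∈ s, rle cs x r) → rle cs p r

/-- The generating set of the poset group/monoid: the interval `[1,γ]` minus the identity. -/
abbrev NCGen (cs : CoxeterSystem M W) (γ : W) : Type _ :=
  {w : W // w ≠ 1 ∧ rle cs w γ}

/-- The defining relations of the positive monoid `Γ₊(W,γ)`:
`⟨w₁⟩⟨w₂⟩ = ⟨w₃⟩` whenever `w₁w₂ = w₃` in `W` and `ℓ(w₁) + ℓ(w₂) = ℓ(w₃)`. -/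
def posRels (cs : CoxeterSystem M W) (γ : W) :
    FreeMonoid (NCGen cs γ) → FreeMonoid (NCGen cs γ) → Prop :=
  fun x y => ∃ w₁ w₂ w₃ : NCGen cs γ,
    x = FreeMonoid.of w₁ * FreeMonoid.of w₂ ∧ y = FreeMonoid.of w₃ ∧
    (w₁ : W) * (w₂ : W) = (w₃ : W) ∧
    rlen cs (w₁ : W) + rlen cs (w₂ : W) = rlen cs (w₃ : W)

/-- The positive monoid `Γ₊(W,γ)`, presented by the generators `⟨w⟩`, `w ∈ [1,γ] \ {1}`,
and the relations `posRels`. -/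
abbrev PosMonoid (cs : CoxeterSystem M W) (γ : W) := PresentedMonoid (posRels cs γ)

open Classical in
/-- The generator `⟨w⟩` of `Γ₊(W,γ)` for `w ∈ [1,γ]`, interpreting `⟨1⟩` as the
identity of the monoid (and defaulting to the identity off the interval). -/
noncomputable def pgen (cs : CoxeterSystem M W) (γ : W) (w : W) : PosMonoid cs γ :=
  if h : w ≠ 1 ∧ rle cs w γ then PresentedMonoid.of (posRels cs γ) ⟨w, h⟩ else 1

/-! ### The Tits representation -/

section TitsRepresentation

open Polynomial.Chebyshev

theorem sin_mul_div_nonneg {k m : ℕ} (h : k ≤ m) : 0 ≤ Real.sin (k * (Real.pi / m)) := by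
  refine Real.sin_nonneg_of_nonneg_of_le_pi (by positivity) ?_
  rw [mul_div_left_comm]
  exact mul_le_of_le_one_right Real.pi_nonneg
    (div_le_one_of_le₀ (by exact_mod_cast h) m.cast_nonneg)

theorem chebyshevS_eval_two_mul_cos_nonneg {m k : ℕ} (h : m ≠ 0 → k < m) :
    0 ≤ (S ℝ k).eval (2 * Real.cos (Real.pi / m)) := by
  rcases eq_or_ne m 0 with rfl | hm
  · simp only [Nat.cast_zero, div_zero, Real.cos_zero, mul_one, S_eval_two]
    positivity
  · rcases Nat.lt_or_ge 1 m with hm1 | hm1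
    · have hsin : 0 < Real.sin (Real.pi / m) :=
        Real.sin_pos_of_pos_of_lt_pi (by positivity)
          (div_lt_self Real.pi_pos (by exact_mod_cast hm1))
      refine nonneg_of_mul_nonneg_left ?_ hsin
      rw [S_two_mul_real_cos]
      exact_mod_cast sin_mul_div_nonneg (h hm)
    · obtain rfl : k = 0 := by have := h hm; omega
      simp

theorem chebyshevS_eval_two_mul_cos_eq_zero {k : ℕ} (hk : 2 ≤ k) :
    (S ℝ (k - 1)).eval (2 * Real.cos (Real.pi / k)) = 0 := by
  have hsin : 0 < Real.sin (Real.pi / k) :=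
    Real.sin_pos_of_pos_of_lt_pi (by positivity) (div_lt_self Real.pi_pos (by exact_mod_cast hk))
  refine (mul_eq_zero_iff_right hsin.ne').1 ?_
  rw [S_two_mul_real_cos]
  push_cast
  rw [sub_add_cancel, mul_div_cancel₀ _ (by positivity), Real.sin_pi]

theorem chebyshevS_eval_two_mul_cos_add_eq_zero {k : ℕ} (hk : 1 ≤ k) :
    (S ℝ k).eval (2 * Real.cos (2 * Real.pi / (2 * k + 1))) +
      (S ℝ (k - 1)).eval (2 * Real.cos (2 * Real.pi / (2 * k + 1))) = 0 := by
  set φ : ℝ := 2 * Real.pi / (2 * k + 1) with hφ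
  have hk' : (1 : ℝ) ≤ k := by exact_mod_cast hk
  have hsin : 0 < Real.sin φ := by
    refine Real.sin_pos_of_pos_of_lt_pi (by positivity) ?_
    rw [hφ, div_lt_iff₀ (by positivity)]
    nlinarith [Real.pi_pos]
  refine (mul_eq_zero_iff_right hsin.ne').1 ?_
  have hreflect : ((k : ℝ) + 1) * φ = 2 * Real.pi - k * φ := by rw [hφ]; field_simp; ring
  rw [add_mul, S_two_mul_real_cos, S_two_mul_real_cos]
  push_cast
  rw [sub_add_cancel, hreflect, Real.sin_two_pi_sub, neg_add_cancel]

theorem reflection_mul_reflection_pow_eq_one {V : Type*} [AddCommGroup V] [Module ℝ V] {x y : V}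
    {f g : Module.Dual ℝ V} (hf : f x = 2) (hg : g y = 2) {m : ℕ} (hm : 3 ≤ m)
    (h : f y * g x = 4 * Real.cos (Real.pi / m) ^ 2) :
    (Module.reflection hf * Module.reflection hg) ^ m = 1 := by
  have htrace : 2 * Real.cos (2 * Real.pi / m) = f y * g x - 2 := by
    rw [h, mul_div_assoc, Real.cos_two_mul]
    ring
  ext1 z
  rw [Module.reflection_mul_reflection_pow_apply _ _ m z _ htrace]
  obtain ⟨k, rfl | rfl⟩ := Nat.even_or_odd' m
  · have hS : (S ℝ (k - 1)).eval (2 * Real.cos (2 * Real.pi / (2 * k : ℕ))) = 0 := by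
      rw [Nat.cast_mul, Nat.cast_two, mul_div_mul_left _ _ two_ne_zero]
      exact chebyshevS_eval_two_mul_cos_eq_zero (by omega)
    rw [show (((2 * k : ℕ) : ℤ) - 2) / 2 = k - 1 by omega,
      show (((2 * k : ℕ) : ℤ) - 1) / 2 = k - 1 by omega, hS]
    simp
  · have hS := chebyshevS_eval_two_mul_cos_add_eq_zero (k := k) (by omega)
    rw [show (((2 * k + 1 : ℕ) : ℤ) - 2) / 2 = k - 1 by omega,
      show (((2 * k + 1 : ℕ) : ℤ) - 1) / 2 = k by omega,
      show (((2 * k + 1 : ℕ) : ℤ) - 3) / 2 = k - 1 by omega,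
      show ((2 * k + 1 : ℕ) : ℤ) / 2 = k by omega]
    push_cast
    rw [hS]
    simp

open Classical in
/-- The simple root `α_i`: the standard basis vector of `B → ℝ`. -/
noncomputable def simpleRoot (i : B) : B → ℝ := Pi.single i 1

@[simp]
theorem simpleRoot_self (i : B) : simpleRoot i i = 1 := by simp [simpleRoot]

theorem simpleRoot_of_ne {i j : B} (h : j ≠ i) : simpleRoot i j = 0 := by simp [simpleRoot, h]

theorem simpleRoot_nonneg (i : B) : 0 ≤ simpleRoot i := by
  classical
  exact Pi.single_nonneg.2 zero_le_one

theorem simpleRoot_ne_zero (i : B) : simpleRoot i ≠ 0 := fun h => by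
  simpa using congrFun h i

variable [Fintype B]

/-- The simple coroot `α_i^∨`, the functional `x ↦ -2 ∑ j, cos (π / m_ij) x_j`. For `m_ij = 0`
(encoding `∞`) the convention `π / 0 = 0` yields the usual coefficient `-2`. -/
noncomputable def simpleCoroot (M : CoxeterMatrix B) (i : B) : Module.Dual ℝ (B → ℝ) :=
  ∑ j, (-2 * Real.cos (Real.pi / M i j)) • LinearMap.proj j

theorem simpleCoroot_simpleRoot (i j : B) :
    simpleCoroot M i (simpleRoot j) = -2 * Real.cos (Real.pi / M i j) := by
  classical
  simp [simpleCoroot, simpleRoot, Pi.single_apply]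

theorem simpleCoroot_simpleRoot_comm (i j : B) :
    simpleCoroot M i (simpleRoot j) = simpleCoroot M j (simpleRoot i) := by
  rw [simpleCoroot_simpleRoot, simpleCoroot_simpleRoot, M.symmetric j i]

@[simp]
theorem simpleCoroot_self (i : B) : simpleCoroot M i (simpleRoot i) = 2 := by
  simp [simpleCoroot_simpleRoot]

theorem isLiftable_reflection_simpleCoroot :
    M.IsLiftable fun i => Module.reflection (simpleCoroot_self (M := M) i) := by
  intro i j
  rcases eq_or_ne i j with rfl | hij
  · rw [M.diagonal, pow_one, mul_eq_one_iff_eq_inv, Module.reflection_inv]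
  have hne : M i j ≠ 1 := M.off_diagonal i j hij
  rcases Nat.lt_or_ge (M i j) 3 with hm | hm
  · obtain hm | hm : M i j = 0 ∨ M i j = 2 := by omega
    · rw [hm, pow_zero]
    · have hij : simpleCoroot M i (simpleRoot j) = 0 := by simp [simpleCoroot_simpleRoot, hm]
      have hji : simpleCoroot M j (simpleRoot i) = 0 := by rw [simpleCoroot_simpleRoot_comm, hij]
      rw [hm, pow_two]
      ext1 x
      simp only [LinearEquiv.mul_apply, Module.reflection_apply, map_sub, map_smul, hij, hji,
        simpleCoroot_self, LinearEquiv.coe_one, id]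
      module
  · refine reflection_mul_reflection_pow_eq_one _ _ hm ?_
    rw [simpleCoroot_simpleRoot_comm j i, simpleCoroot_simpleRoot]
    ring

/-- The Tits representation of a Coxeter group on `B → ℝ`. -/
noncomputable def titsRep (cs : CoxeterSystem M W) : Representation ℝ W (B → ℝ) :=
  (LinearEquiv.automorphismGroup.toLinearMapMonoidHom (R := ℝ) (M := B → ℝ)).comp
    (cs.lift ⟨_, isLiftable_reflection_simpleCoroot⟩)

variable (cs : CoxeterSystem M W)

theorem titsRep_simple_apply (i : B) (x : B → ℝ) :
    titsRep cs (cs.simple i) x = x - simpleCoroot M i x • simpleRoot i := by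
  change cs.lift ⟨_, isLiftable_reflection_simpleCoroot⟩ (cs.simple i) x = _
  rw [cs.lift_apply_simple, Module.reflection_apply]

theorem titsRep_simple_apply_of_ne {i j : B} (h : j ≠ i) (x : B → ℝ) :
    titsRep cs (cs.simple i) x j = x j := by
  simp [titsRep_simple_apply, simpleRoot_of_ne h]

@[simp]
theorem titsRep_simple_apply_simpleRoot (i : B) :
    titsRep cs (cs.simple i) (simpleRoot i) = -simpleRoot i := by
  rw [titsRep_simple_apply, simpleCoroot_self]
  module

-- The coefficients are those of the rotation through the angle `2π / m_st`, written as Chebyshev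
-- polynomials so that the formula remains true for `m_st = ∞`.
theorem titsRep_alternatingWord_apply (s t : B) (k : ℕ) :
    titsRep cs (cs.wordProd (CoxeterSystem.alternatingWord s t k)) (simpleRoot s) =
      if Even k then
        (S ℝ k).eval (2 * Real.cos (Real.pi / M s t)) • simpleRoot s +
          (S ℝ (k - 1)).eval (2 * Real.cos (Real.pi / M s t)) • simpleRoot t
      else
        (S ℝ (k - 1)).eval (2 * Real.cos (Real.pi / M s t)) • simpleRoot s +
          (S ℝ k).eval (2 * Real.cos (Real.pi / M s t)) • simpleRoot t := by
  set c := 2 * Real.cos (Real.pi / M s t) with hc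
  have hst : simpleCoroot M s (simpleRoot t) = -c := by rw [simpleCoroot_simpleRoot, hc]; ring
  have hts : simpleCoroot M t (simpleRoot s) = -c := by rw [simpleCoroot_simpleRoot_comm, hst]
  have hrec (k : ℕ) : (S ℝ (k + 1 : ℕ)).eval c = c * (S ℝ k).eval c - (S ℝ (k - 1)).eval c := by
    simp [S_add_one]
  induction k with
  | zero => simp [CoxeterSystem.alternatingWord]
  | succ k ih =>
    rw [CoxeterSystem.alternatingWord_succ', cs.wordProd_cons, map_mul, Module.End.mul_apply, ih,
      hrec, Nat.cast_succ, add_sub_cancel_right]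
    by_cases hk : Even k
    · simp only [hk, Nat.even_add_one, not_true, if_true, if_false, titsRep_simple_apply, map_add,
        map_smul, hts, simpleCoroot_self]
      module
    · simp only [hk, Nat.even_add_one, not_false_eq_true, if_true, if_false, titsRep_simple_apply,
        map_add, map_smul, hst, simpleCoroot_self]
      module

end TitsRepresentation

section Positivity

open CoxeterSystem

variable (cs : CoxeterSystem M W)

theorem lt_of_length_add_eq_length_mul_alternatingWord {v : W} {s t : B} {k : ℕ}
    (hlen : cs.length v + k = cs.length (v * cs.wordProd (alternatingWord s t k)))
    (hs : ¬ cs.IsRightDescent (v * cs.wordProd (alternatingWord s t k)) s) (hM : M s t ≠ 0) :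
    k < M s t := by
  rcases lt_trichotomy k (M s t) with hk | rfl | hk
  · exact hk
  · obtain ⟨q, hq⟩ := Nat.exists_eq_succ_of_ne_zero hM
    have hbraid : cs.wordProd (alternatingWord s t (M s t)) * cs.simple s =
        cs.wordProd (alternatingWord s t q) := by
      have h := cs.wordProd_braidWord_eq s t
      rw [braidWord, braidWord, M.symmetric t s] at h
      rw [h, hq, alternatingWord_succ, cs.wordProd_concat, cs.simple_mul_simple_cancel_right]
    have hdesc := cs.not_isRightDescent_iff.1 hs
    have hle := cs.length_mul_le v (cs.wordProd (alternatingWord s t q))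
    have hle' := cs.length_wordProd_le (alternatingWord s t q)
    rw [mul_assoc, hbraid] at hdesc
    rw [length_alternatingWord] at hle'
    omega
  · refine absurd ?_ (cs.not_isReduced_alternatingWord s t hM hk)
    have hle := cs.length_mul_le v (cs.wordProd (alternatingWord s t k))
    have hle' := cs.length_wordProd_le (alternatingWord s t k)
    rw [length_alternatingWord] at hle'
    rw [CoxeterSystem.IsReduced, length_alternatingWord]
    omega

theorem not_isRightDescent_of_forall_length_lt {w v : W} {s t : B} {k : ℕ} (hk : 1 ≤ k)
    (hw : w = v * cs.wordProd (alternatingWord s t k)) (hlen : cs.length v + k = cs.length w)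
    (hmax : cs.length w <
      cs.length (w * (cs.wordProd (alternatingWord s t (k + 1)))⁻¹) + (k + 1)) :
    ¬ cs.IsRightDescent v s ∧ ¬ cs.IsRightDescent v t := by
  have hnext : ¬ cs.IsRightDescent v (if Even k then t else s) := fun h => by
    rw [alternatingWord_succ', cs.wordProd_cons, mul_inv_rev, cs.inv_simple, ← mul_assoc, hw,
      mul_inv_cancel_right, ← hw] at hmax
    have := cs.isRightDescent_iff.1 h
    omega
  have hprev : ¬ cs.IsRightDescent v (if Even k then s else t) := fun h => by
    obtain ⟨l, rfl⟩ := Nat.exists_eq_add_of_le' hk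
    have hif : (if Even (l + 1) then s else t) = if Even l then t else s := by
      by_cases hl : Even l <;> simp [Nat.even_add_one, hl]
    rw [hif] at h
    rw [alternatingWord_succ', cs.wordProd_cons, ← mul_assoc] at hw
    have hle := cs.length_mul_le (v * cs.simple (if Even l then t else s))
      (cs.wordProd (alternatingWord s t l))
    have hle' := cs.length_wordProd_le (alternatingWord s t l)
    have := cs.isRightDescent_iff.1 h
    rw [← hw] at hle
    rw [length_alternatingWord] at hle'
    omega
  by_cases he : Even k
  · simp only [he, if_true] at hnext hprev
    exact ⟨hprev, hnext⟩
  · simp only [he, if_false] at hnext hprev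
    exact ⟨hnext, hprev⟩

theorem exists_eq_mul_alternatingWord {w : W} {s t : B} (hs : ¬ cs.IsRightDescent w s)
    (ht : cs.IsRightDescent w t) :
    ∃ v k, w = v * cs.wordProd (alternatingWord s t k) ∧ cs.length v < cs.length w ∧
      ¬ cs.IsRightDescent v s ∧ ¬ cs.IsRightDescent v t ∧ (M s t ≠ 0 → k < M s t) := by
  classical
  let P : ℕ → Prop := fun k =>
    cs.length (w * (cs.wordProd (alternatingWord s t k))⁻¹) + k = cs.length w
  have hle {k : ℕ} (hk : P k) : k ≤ cs.length w := hk ▸ Nat.le_add_left _ _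
  have hP1 : P 1 := by
    simpa [P, alternatingWord] using cs.isRightDescent_iff.1 ht
  set k := Nat.findGreatest P (cs.length w)
  have hk : P k := Nat.findGreatest_spec (hle hP1) hP1
  have hk1 : 1 ≤ k := Nat.le_findGreatest (hle hP1) hP1
  have hmax : ¬ P (k + 1) := fun h => (Nat.le_findGreatest (hle h) h).not_gt k.lt_succ_self
  have hw : w = w * (cs.wordProd (alternatingWord s t k))⁻¹ *
      cs.wordProd (alternatingWord s t k) := (inv_mul_cancel_right _ _).symm
  have hlen := cs.length_mul_le (w * (cs.wordProd (alternatingWord s t (k + 1)))⁻¹)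
    (cs.wordProd (alternatingWord s t (k + 1)))
  have hlen' := cs.length_wordProd_le (alternatingWord s t (k + 1))
  rw [inv_mul_cancel_right] at hlen
  rw [length_alternatingWord] at hlen'
  have hdesc := not_isRightDescent_of_forall_length_lt cs hk1 hw hk
    (lt_of_le_of_ne (by omega) (Ne.symm hmax))
  refine ⟨_, k, hw, ?_, hdesc.1, hdesc.2, ?_⟩
  · simp only [P] at hk
    omega
  · rw [hw] at hs
    exact lt_of_length_add_eq_length_mul_alternatingWord cs (by rwa [← hw]) hs

theorem titsRep_simpleRoot_nonneg [Fintype B] (w : W) (s : B) (h : ¬ cs.IsRightDescent w s) :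
    0 ≤ titsRep cs w (simpleRoot s) := by
  induction hn : cs.length w using Nat.strong_induction_on generalizing w s with
  | _ n ih =>
  subst hn
  rcases eq_or_ne w 1 with rfl | hw
  · simpa using simpleRoot_nonneg s
  obtain ⟨t, ht⟩ := cs.exists_rightDescent_of_ne_one hw
  obtain ⟨v, k, rfl, hlt, hvs, hvt, hk⟩ := exists_eq_mul_alternatingWord cs h ht
  have hs := ih _ hlt v s hvs rfl
  have ht := ih _ hlt v t hvt rfl
  have hcoeff := chebyshevS_eval_two_mul_cos_nonneg hk
  have hcoeff' : 0 ≤ (Polynomial.Chebyshev.S ℝ (k - 1)).eval (2 * Real.cos (Real.pi / M s t)) := by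
    rcases k with _ | k
    · simp
    · rw [Nat.cast_succ, add_sub_cancel_right]
      exact chebyshevS_eval_two_mul_cos_nonneg fun hM => (k.lt_succ_self).trans (hk hM)
  rw [map_mul, Module.End.mul_apply, titsRep_alternatingWord_apply]
  split_ifs <;> rw [map_add, map_smul, map_smul] <;> positivity

end Positivity

/-! ### Reflection length and reflection order -/

section ReflectionOrder

variable {cs : CoxeterSystem M W} {u v w x y z γ : W}

theorem rlen_prod_le {l : List W} (h : ∀ t ∈ l, cs.IsReflection t) :
    rlen cs l.prod ≤ l.length :=
  Nat.sInf_le ⟨l, h, rfl, rfl⟩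

theorem exists_reflections_length_eq_rlen (cs : CoxeterSystem M W) (w : W) :
    ∃ l : List W, (∀ t ∈ l, cs.IsReflection t) ∧ l.length = rlen cs w ∧ l.prod = w := by
  obtain ⟨l, rfl⟩ := cs.wordProd_surjective w
  refine Nat.sInf_mem (s := {k | ∃ l' : List W, (∀ t ∈ l', cs.IsReflection t) ∧ l'.length = k ∧
    l'.prod = cs.wordProd l}) ⟨_, l.map cs.simple, fun t ht => ?_, rfl, rfl⟩
  obtain ⟨i, -, rfl⟩ := List.mem_map.1 ht
  exact cs.isReflection_simple i

theorem rlen_one : rlen cs 1 = 0 :=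
  Nat.le_zero.1 (rlen_prod_le (cs := cs) (l := []) (by simp))

theorem eq_one_of_rlen_eq_zero (h : rlen cs w = 0) : w = 1 := by
  obtain ⟨l, -, hl, rfl⟩ := exists_reflections_length_eq_rlen cs w
  rw [h, List.length_eq_zero_iff] at hl
  rw [hl, List.prod_nil]

theorem rlen_mul_le (v w : W) : rlen cs (v * w) ≤ rlen cs v + rlen cs w := by
  obtain ⟨l, hl, hlen, hprod⟩ := exists_reflections_length_eq_rlen cs v
  obtain ⟨l', hl', hlen', hprod'⟩ := exists_reflections_length_eq_rlen cs w
  rw [← hlen, ← hlen', ← List.length_append, ← hprod, ← hprod', ← List.prod_append]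
  exact rlen_prod_le fun t ht => (List.mem_append.1 ht).elim (hl t) (hl' t)

theorem rlen_le_one_of_isReflection (h : cs.IsReflection w) : rlen cs w ≤ 1 := by
  simpa using rlen_prod_le (cs := cs) (l := [w]) (by simpa using h)

theorem rlen_le_rlen_mul_add_one {t : W} (ht : cs.IsReflection t) (w : W) :
    rlen cs w ≤ rlen cs (t * w) + 1 := by
  have hmul := rlen_mul_le (cs := cs) t (t * w)
  rw [← mul_assoc, ht.mul_self, one_mul] at hmul
  have := rlen_le_one_of_isReflection ht
  omega

theorem rlen_conj_le (v w : W) : rlen cs (v * w * v⁻¹) ≤ rlen cs w := by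
  obtain ⟨l, hl, hlen, rfl⟩ := exists_reflections_length_eq_rlen cs w
  rw [← hlen, ← List.length_map (f := MulAut.conj v), ← MulAut.conj_apply, map_list_prod]
  refine rlen_prod_le fun t ht => ?_
  obtain ⟨r, hr, rfl⟩ := List.mem_map.1 ht
  exact (hl r hr).conj v

theorem rlen_conj (v w : W) : rlen cs (v * w * v⁻¹) = rlen cs w := by
  refine le_antisymm (rlen_conj_le v w) ?_
  simpa [mul_assoc] using rlen_conj_le (cs := cs) v⁻¹ (v * w * v⁻¹)

theorem rlen_mul_comm (v w : W) : rlen cs (v * w) = rlen cs (w * v) := by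
  rw [← rlen_conj w (v * w)]
  group

theorem rle_of_rlen_add_le (h : rlen cs u + rlen cs (u⁻¹ * w) ≤ rlen cs w) : rle cs u w := by
  refine le_antisymm ?_ h
  simpa using rlen_mul_le (cs := cs) u (u⁻¹ * w)

theorem rle_refl (u : W) : rle cs u u := by simp [rle, rlen_one]

theorem one_rle (u : W) : rle cs 1 u := by simp [rle, rlen_one]

theorem rle.trans (huv : rle cs u v) (hvw : rle cs v w) : rle cs u w := by
  apply rle_of_rlen_add_le
  have h := rlen_mul_le (cs := cs) (u⁻¹ * v) (v⁻¹ * w)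
  rw [mul_assoc, mul_inv_cancel_left] at h
  unfold rle at huv hvw
  omega

theorem rle.conj (h : rle cs u w) (v : W) : rle cs (v * u * v⁻¹) (v * w * v⁻¹) := by
  unfold rle
  rw [show (v * u * v⁻¹)⁻¹ * (v * w * v⁻¹) = v * (u⁻¹ * w) * v⁻¹ by group, rlen_conj, rlen_conj,
    rlen_conj]
  exact h

theorem rle_conj_iff (v : W) : rle cs (v * u * v⁻¹) (v * w * v⁻¹) ↔ rle cs u w :=
  ⟨fun h => by simpa [mul_assoc] using h.conj v⁻¹, fun h => h.conj v⟩

theorem rle.inv_mul_rle_inv_mul (h : rle cs u w) (hw : rle cs w γ) :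
    rle cs (w⁻¹ * γ) (u⁻¹ * γ) := by
  have hu := h.trans hw
  have hlen : rlen cs ((w⁻¹ * γ)⁻¹ * (u⁻¹ * γ)) = rlen cs (u⁻¹ * w) := by
    rw [show (w⁻¹ * γ)⁻¹ * (u⁻¹ * γ) = γ⁻¹ * (w * u⁻¹) * γ⁻¹⁻¹ by group, rlen_conj,
      rlen_mul_comm]
  unfold rle at *
  omega

theorem rle.inv_mul_rle (h : rle cs x γ) : rle cs (x⁻¹ * γ) γ := by
  simpa using (one_rle x).inv_mul_rle_inv_mul h

theorem rle.mul_inv_rle (h : rle cs x γ) : rle cs (γ * x⁻¹) γ := by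
  simpa [mul_assoc] using h.inv_mul_rle.conj γ

theorem inv_mul_rle_inv_mul_iff (hy : rle cs x y) (hz : rle cs x z) :
    rle cs (x⁻¹ * y) (x⁻¹ * z) ↔ rle cs y z := by
  unfold rle at *
  rw [show (x⁻¹ * y)⁻¹ * (x⁻¹ * z) = y⁻¹ * z by group]
  omega

theorem rle_mul_of_rle_inv_mul (hx : rle cs x γ) (hy : rle cs y (x⁻¹ * γ)) :
    rle cs x (x * y) ∧ rle cs (x * y) γ := by
  have hxy := rlen_mul_le (cs := cs) x y
  have hγ := rlen_mul_le (cs := cs) (x * y) ((x * y)⁻¹ * γ)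
  rw [mul_inv_cancel_left] at hγ
  unfold rle at *
  rw [inv_mul_cancel_left]
  rw [← mul_assoc, ← mul_inv_rev] at hy
  omega

end ReflectionOrder

/-! ### Fixed spaces and moved spaces -/

section MovedSpace

variable {k V G : Type*} [CommRing k] [AddCommGroup V] [Module k V] [Group G]
  (ρ : Representation k G V)

/-- The moved space of `g`: the image of `g - 1`. -/
def movedSpace (g : G) : Submodule k V := LinearMap.range (ρ g - 1)

variable {ρ}

theorem mem_movedSpace {g : G} {y : V} : y ∈ movedSpace ρ g ↔ ∃ x, ρ g x - x = y := by
  simp [movedSpace]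

theorem sub_mem_movedSpace (g : G) (x : V) : ρ g x - x ∈ movedSpace ρ g :=
  mem_movedSpace.2 ⟨x, rfl⟩

theorem movedSpace_one : movedSpace ρ (1 : G) = ⊥ := by
  simp [movedSpace]

theorem mem_movedSpace_conj {g h : G} {y : V} :
    y ∈ movedSpace ρ (h * g * h⁻¹) ↔ ρ h⁻¹ y ∈ movedSpace ρ g := by
  simp only [mem_movedSpace, map_mul, Module.End.mul_apply]
  constructor
  · rintro ⟨x, rfl⟩
    exact ⟨ρ h⁻¹ x, by simp⟩
  · rintro ⟨x, hx⟩
    exact ⟨ρ h x, by rw [ρ.inv_self_apply, ← map_sub, hx, ρ.self_inv_apply]⟩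

theorem apply_mem_movedSpace_conj {g h : G} {y : V} :
    ρ h y ∈ movedSpace ρ (h * g * h⁻¹) ↔ y ∈ movedSpace ρ g := by
  rw [mem_movedSpace_conj, ρ.inv_self_apply]

theorem movedSpace_mul_le (g h : G) :
    movedSpace ρ (g * h) ≤ movedSpace ρ g ⊔ movedSpace ρ h := by
  intro y hy
  obtain ⟨x, rfl⟩ := mem_movedSpace.1 hy
  rw [map_mul, Module.End.mul_apply, ← sub_add_sub_cancel _ (ρ h x) x]
  exact Submodule.add_mem_sup (sub_mem_movedSpace _ _) (sub_mem_movedSpace _ _)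

theorem movedSpace_inv_le (g : G) : movedSpace ρ g⁻¹ ≤ movedSpace ρ g := by
  intro y hy
  obtain ⟨x, rfl⟩ := mem_movedSpace.1 hy
  rw [← neg_sub]
  nth_rewrite 1 [← ρ.self_inv_apply g x]
  exact Submodule.neg_mem _ (sub_mem_movedSpace _ _)

theorem mem_fixedSubmodule_inv_mul {g h : G} {x : V} :
    x ∈ (ρ (g⁻¹ * h)).fixedSubmodule ↔ ρ h x = ρ g x := by
  rw [LinearMap.mem_fixedSubmodule_iff, map_mul, Module.End.mul_apply]
  refine ⟨fun hx => ?_, fun hx => by rw [hx, ρ.inv_self_apply]⟩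
  rw [← ρ.self_inv_apply g (ρ h x), hx]

end MovedSpace

section Dimension

variable {k V G : Type*} [Field k] [AddCommGroup V] [Module k V] [FiniteDimensional k V] [Group G]
  {ρ : Representation k G V}

theorem finrank_movedSpace_add_finrank_fixedSubmodule (g : G) :
    Module.finrank k (movedSpace ρ g) + Module.finrank k (ρ g).fixedSubmodule =
      Module.finrank k V := by
  rw [LinearMap.fixedSubmodule_eq_ker]
  exact LinearMap.finrank_range_add_finrank_ker (ρ g - 1)

theorem finrank_movedSpace_mul_le (g h : G) :
    Module.finrank k (movedSpace ρ (g * h)) ≤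
      Module.finrank k (movedSpace ρ g) + Module.finrank k (movedSpace ρ h) :=
  (Submodule.finrank_mono (movedSpace_mul_le g h)).trans
    (Submodule.finrank_add_le_finrank_add_finrank _ _)

variable {g h : G} (hgh : Module.finrank k (movedSpace ρ (g * h)) =
  Module.finrank k (movedSpace ρ g) + Module.finrank k (movedSpace ρ h))

include hgh

theorem movedSpace_mul_eq_sup : movedSpace ρ (g * h) = movedSpace ρ g ⊔ movedSpace ρ h :=
  Submodule.eq_of_le_of_finrank_le (movedSpace_mul_le g h)
    (hgh ▸ Submodule.finrank_add_le_finrank_add_finrank _ _)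

theorem disjoint_movedSpace : Disjoint (movedSpace ρ g) (movedSpace ρ h) := by
  rw [disjoint_iff, ← Submodule.finrank_eq_zero (R := k)]
  have hdim := Submodule.finrank_sup_add_finrank_inf_eq (movedSpace ρ g) (movedSpace ρ h)
  rw [← movedSpace_mul_eq_sup hgh] at hdim
  omega

theorem mem_fixedSubmodule_iff_sub_mem_movedSpace {x : V} :
    x ∈ (ρ h).fixedSubmodule ↔ ρ (g * h) x - x ∈ movedSpace ρ g := by
  rw [LinearMap.mem_fixedSubmodule_iff, map_mul, Module.End.mul_apply]
  refine ⟨fun hx => by rw [hx]; exact sub_mem_movedSpace g x, fun hx => sub_eq_zero.1 ?_⟩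
  refine Submodule.disjoint_def.1 (disjoint_movedSpace hgh) _ ?_ (sub_mem_movedSpace h x)
  have := Submodule.sub_mem _ hx (sub_mem_movedSpace g (ρ h x))
  rwa [sub_sub_sub_cancel_left] at this

end Dimension

section Reflection

variable {V G : Type*} [AddCommGroup V] [Module ℝ V] [Group G] (ρ : Representation ℝ G V)

/-- `t` acts as a reflection with root `β`, not necessarily orthogonal for any given scalar
product. -/
def ActsAsReflection (t : G) (β : V) : Prop :=
  ∃ f : Module.Dual ℝ V, f β = 2 ∧ ∀ x, ρ t x = x - f x • β

variable {ρ} {t : G} {β : V}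

theorem ActsAsReflection.ne_zero (h : ActsAsReflection ρ t β) : β ≠ 0 := by
  rintro rfl
  obtain ⟨f, hf, -⟩ := h
  simp at hf

theorem ActsAsReflection.conj (h : ActsAsReflection ρ t β) (g : G) :
    ActsAsReflection ρ (g * t * g⁻¹) (ρ g β) := by
  obtain ⟨f, hf, ht⟩ := h
  refine ⟨f ∘ₗ ρ g⁻¹, by simpa using hf, fun x => ?_⟩
  simp [ht]

theorem ActsAsReflection.movedSpace_eq (h : ActsAsReflection ρ t β) :
    movedSpace ρ t = Submodule.span ℝ {β} := by
  obtain ⟨f, hf, ht⟩ := h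
  apply le_antisymm
  · intro y hy
    obtain ⟨x, rfl⟩ := mem_movedSpace.1 hy
    rw [ht, sub_sub_cancel_left]
    exact Submodule.neg_mem _ (Submodule.smul_mem _ _ (Submodule.mem_span_singleton_self _))
  · rw [Submodule.span_singleton_le_iff_mem, mem_movedSpace]
    refine ⟨(-1 / 2 : ℝ) • β, ?_⟩
    rw [ht, map_smul, hf, smul_eq_mul]
    module

end Reflection

section InvariantScalarProduct

variable {V G : Type*} [AddCommGroup V] [Module ℝ V] [Group G] (ρ : Representation ℝ G V)

/-- `b` is a scalar product (a symmetric positive definite bilinear form) invariant under `ρ`. -/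
structure IsInvariantScalarProduct (b : LinearMap.BilinForm ℝ V) : Prop where
  symm : ∀ x y, b x y = b y x
  pos : ∀ x, x ≠ 0 → 0 < b x x
  apply_apply : ∀ g x y, b (ρ g x) (ρ g y) = b x y

open Matrix in
theorem exists_isInvariantScalarProduct [FiniteDimensional ℝ V] [Finite G] :
    ∃ b, IsInvariantScalarProduct ρ b := by
  cases nonempty_fintype G
  set e := (Module.finBasis ℝ V).equivFun
  refine ⟨LinearMap.mk₂ ℝ (fun x y => ∑ g, e (ρ g x) ⬝ᵥ e (ρ g y))
    (fun x y z => by simp [Finset.sum_add_distrib]) (fun c x y => by simp [Finset.mul_sum])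
    (fun x y z => by simp [Finset.sum_add_distrib]) (fun c x y => by simp [Finset.mul_sum]),
    fun x y => Finset.sum_congr rfl fun g _ => dotProduct_comm _ _, fun x hx => ?_,
    fun h x y => ?_⟩
  · have hnonneg (g : G) : 0 ≤ e (ρ g x) ⬝ᵥ e (ρ g x) :=
      Finset.sum_nonneg fun i _ => mul_self_nonneg _
    refine Finset.sum_pos' (fun g _ => hnonneg g) ⟨1, Finset.mem_univ _, (hnonneg 1).lt_of_ne' ?_⟩
    simpa [dotProduct_self_eq_zero] using hx
  · simp only [LinearMap.mk₂_apply, ← Module.End.mul_apply, ← map_mul]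
    exact Fintype.sum_equiv (Equiv.mulRight h) _ _ fun g => rfl

variable {ρ} {b : LinearMap.BilinForm ℝ V} (hb : IsInvariantScalarProduct ρ b)
  {g t : G} {x y β : V}

include hb

theorem IsInvariantScalarProduct.eq_zero_of_apply_self (h : b x x = 0) : x = 0 :=
  of_not_not fun hx => (hb.pos x hx).ne' h

theorem IsInvariantScalarProduct.apply_eq_zero (hx : x ∈ (ρ g).fixedSubmodule)
    (hy : y ∈ movedSpace ρ g) : b x y = 0 := by
  obtain ⟨v, rfl⟩ := mem_movedSpace.1 hy
  rw [map_sub, sub_eq_zero]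
  nth_rewrite 1 [← LinearMap.mem_fixedSubmodule_iff.1 hx]
  exact hb.apply_apply g x v

theorem IsInvariantScalarProduct.mem_movedSpace_of_forall [FiniteDimensional ℝ V]
    (h : ∀ x ∈ (ρ g).fixedSubmodule, b x y = 0) : y ∈ movedSpace ρ g := by
  have hdisj : Disjoint (movedSpace ρ g) (ρ g).fixedSubmodule :=
    Submodule.disjoint_def.2 fun x hx hx' =>
      hb.eq_zero_of_apply_self (hb.apply_eq_zero hx' hx)
  have htop : movedSpace ρ g ⊔ (ρ g).fixedSubmodule = ⊤ :=
    Submodule.eq_top_of_disjoint _ _ (finrank_movedSpace_add_finrank_fixedSubmodule g).ge hdisj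
  obtain ⟨m, hm, f, hf, rfl⟩ := Submodule.mem_sup.1 (htop ▸ Submodule.mem_top (x := y))
  have hff := h f hf
  rw [map_add, hb.apply_eq_zero hf hm, zero_add] at hff
  rwa [hb.eq_zero_of_apply_self hff, add_zero]

theorem IsInvariantScalarProduct.root_functional_mul {f : Module.Dual ℝ V} (hf : f β = 2)
    (ht : ∀ x, ρ t x = x - f x • β) (x : V) : f x * b β β = 2 * b β x := by
  have h := hb.apply_apply t β x
  simp only [ht, hf, map_sub, map_smul, LinearMap.sub_apply, LinearMap.smul_apply,
    smul_eq_mul] at h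
  linarith

theorem IsInvariantScalarProduct.fixedSubmodule_lt (ht : ActsAsReflection ρ t β)
    (hβ : β ∈ movedSpace ρ g) : (ρ g).fixedSubmodule < (ρ (t * g)).fixedSubmodule := by
  have hne := ht.ne_zero
  have hpos := hb.pos β hne
  obtain ⟨f, hf, ht⟩ := ht
  have hfx := hb.root_functional_mul hf ht
  obtain ⟨v, hv⟩ := mem_movedSpace.1 hβ
  have hgv : ρ g v = v + β := by rw [← hv, add_sub_cancel]
  refine lt_of_le_of_ne (fun x hx => ?_) fun heq => ?_
  · have hfx0 : f x = 0 := by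
      have := hfx x
      rw [hb.symm β x, hb.apply_eq_zero hx hβ, mul_zero] at this
      exact (mul_eq_zero_iff_right hpos.ne').1 this
    rw [LinearMap.mem_fixedSubmodule_iff] at hx ⊢
    rw [map_mul, Module.End.mul_apply, hx, ht, hfx0, zero_smul, sub_zero]
  · have hfv : f (ρ g v) = 1 := by
      have hnorm := hb.apply_apply g v v
      simp only [hgv, map_add, LinearMap.add_apply, hb.symm v β] at hnorm
      refine mul_right_cancel₀ hpos.ne' ?_
      rw [hfx, hgv, map_add]
      linarith
    have hmem : v ∈ (ρ (t * g)).fixedSubmodule := by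
      rw [LinearMap.mem_fixedSubmodule_iff, map_mul, Module.End.mul_apply, ht, hfv, hgv, one_smul,
        add_sub_cancel_right]
    rw [← heq, LinearMap.mem_fixedSubmodule_iff] at hmem
    exact hne (by rw [← hv, hmem, sub_self])

end InvariantScalarProduct

section FiniteGroup

variable {V G : Type*} [AddCommGroup V] [Module ℝ V] [FiniteDimensional ℝ V] [Group G] [Finite G]
  {ρ : Representation ℝ G V}

theorem movedSpace_le_of_fixedSubmodule_le {g h : G}
    (hgh : (ρ h).fixedSubmodule ≤ (ρ g).fixedSubmodule) : movedSpace ρ g ≤ movedSpace ρ h := by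
  obtain ⟨b, hb⟩ := exists_isInvariantScalarProduct ρ
  exact fun y hy => hb.mem_movedSpace_of_forall fun x hx => hb.apply_eq_zero (hgh hx) hy

/-- The argument of Brady and Watt: `movedSpace ρ (u⁻¹ * w)` lies in `movedSpace ρ w`, and also in
`movedSpace ρ (u⁻¹ * c)`, which meets `movedSpace ρ u` trivially. -/
theorem finrank_movedSpace_add_finrank_movedSpace_inv_mul_le {u w c : G}
    (hu : Module.finrank ℝ (movedSpace ρ c) =
      Module.finrank ℝ (movedSpace ρ u) + Module.finrank ℝ (movedSpace ρ (u⁻¹ * c)))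
    (hw : Module.finrank ℝ (movedSpace ρ c) =
      Module.finrank ℝ (movedSpace ρ w) + Module.finrank ℝ (movedSpace ρ (w⁻¹ * c)))
    (huw : movedSpace ρ u ≤ movedSpace ρ w) :
    Module.finrank ℝ (movedSpace ρ u) + Module.finrank ℝ (movedSpace ρ (u⁻¹ * w)) ≤
      Module.finrank ℝ (movedSpace ρ w) := by
  rw [← mul_inv_cancel_left u c, inv_mul_cancel_left] at hu
  rw [← mul_inv_cancel_left w c, inv_mul_cancel_left] at hw
  have hfixed : (ρ (u⁻¹ * c)).fixedSubmodule ≤ (ρ (u⁻¹ * w)).fixedSubmodule := by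
    intro z hz
    have hz' : z ∈ (ρ (w⁻¹ * c)).fixedSubmodule := by
      rw [mem_fixedSubmodule_iff_sub_mem_movedSpace hu, mul_inv_cancel_left] at hz
      rw [mem_fixedSubmodule_iff_sub_mem_movedSpace hw, mul_inv_cancel_left]
      exact huw hz
    rw [mem_fixedSubmodule_inv_mul] at hz hz' ⊢
    rw [← hz, ← hz']
  have hdisj : Disjoint (movedSpace ρ u) (movedSpace ρ (u⁻¹ * w)) :=
    (disjoint_movedSpace hu).mono_right (movedSpace_le_of_fixedSubmodule_le hfixed)
  have hle : movedSpace ρ u ⊔ movedSpace ρ (u⁻¹ * w) ≤ movedSpace ρ w :=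
    sup_le huw ((movedSpace_mul_le _ _).trans (sup_le ((movedSpace_inv_le u).trans huw) le_rfl))
  rw [← Submodule.finrank_sup_add_finrank_inf_eq, hdisj.eq_bot, finrank_bot, add_zero]
  exact Submodule.finrank_mono hle

end FiniteGroup

/-! ### Roots -/

section Roots

variable [Fintype B] (cs : CoxeterSystem M W)

/-- The roots of `cs`: the images of the simple roots under the Tits representation. -/
def IsRoot (β : B → ℝ) : Prop := ∃ w i, titsRep cs w (simpleRoot i) = β

/-- The positive roots lying in the subspace `U`. -/
def posRoots (U : Submodule ℝ (B → ℝ)) : Set (B → ℝ) := {β | IsRoot cs β ∧ 0 ≤ β ∧ β ∈ U}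

variable {cs} {β : B → ℝ} {w t : W}

theorem isRoot_simpleRoot (i : B) : IsRoot cs (simpleRoot i) := ⟨1, i, by simp⟩

theorem IsRoot.titsRep_apply (h : IsRoot cs β) (w : W) : IsRoot cs (titsRep cs w β) := by
  obtain ⟨v, i, rfl⟩ := h
  exact ⟨w * v, i, by simp⟩

theorem IsRoot.neg (h : IsRoot cs β) : IsRoot cs (-β) := by
  obtain ⟨v, i, rfl⟩ := h
  exact ⟨v * cs.simple i, i, by simp⟩

theorem IsRoot.ne_zero (h : IsRoot cs β) : β ≠ 0 := by
  obtain ⟨v, i, rfl⟩ := h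
  refine fun h0 => simpleRoot_ne_zero i ?_
  rw [← (titsRep cs).inv_self_apply v (simpleRoot i), h0, map_zero]

theorem IsRoot.nonneg_or_neg_nonneg (h : IsRoot cs β) : 0 ≤ β ∨ 0 ≤ -β := by
  obtain ⟨v, i, rfl⟩ := h
  by_cases hv : cs.IsRightDescent v i
  · right
    simpa using titsRep_simpleRoot_nonneg cs (v * cs.simple i) i
      (cs.isRightDescent_iff_not_isRightDescent_mul.1 hv)
  · exact Or.inl (titsRep_simpleRoot_nonneg cs v i hv)

theorem finite_setOf_isRoot [Finite W] : {β | IsRoot cs β}.Finite := by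
  have hrange : {β | IsRoot cs β} =
      Set.range fun p : W × B => titsRep cs p.1 (simpleRoot p.2) := by
    ext β
    simp [IsRoot]
  exact hrange ▸ Set.finite_range _

theorem eq_one_of_forall_titsRep_simpleRoot_nonneg
    (h : ∀ i, 0 ≤ titsRep cs w (simpleRoot i)) : w = 1 := by
  by_contra hw
  obtain ⟨i, hi⟩ := cs.exists_rightDescent_of_ne_one hw
  have hneg := titsRep_simpleRoot_nonneg cs (w * cs.simple i) i
    (cs.isRightDescent_iff_not_isRightDescent_mul.1 hi)
  rw [map_mul, Module.End.mul_apply, titsRep_simple_apply_simpleRoot, map_neg, neg_nonneg] at hneg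
  exact ((isRoot_simpleRoot i).titsRep_apply w).ne_zero (le_antisymm hneg (h i))

theorem actsAsReflection_simple (i : B) :
    ActsAsReflection (titsRep cs) (cs.simple i) (simpleRoot i) :=
  ⟨simpleCoroot M i, simpleCoroot_self i, titsRep_simple_apply cs i⟩

theorem IsRoot.exists_actsAsReflection (h : IsRoot cs β) :
    ∃ t, cs.IsReflection t ∧ ActsAsReflection (titsRep cs) t β := by
  obtain ⟨v, i, rfl⟩ := h
  exact ⟨_, ⟨v, i, rfl⟩, (actsAsReflection_simple i).conj v⟩

theorem exists_actsAsReflection_of_isReflection (h : cs.IsReflection t) :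
    ∃ β, ActsAsReflection (titsRep cs) t β := by
  obtain ⟨v, i, rfl⟩ := h
  exact ⟨_, (actsAsReflection_simple i).conj v⟩

end Roots

/-! ### Reflection length as a dimension -/

section Dominance

variable [Fintype B] {cs : CoxeterSystem M W} {b : LinearMap.BilinForm ℝ (B → ℝ)}
  (hb : IsInvariantScalarProduct (titsRep cs) b) {v : B → ℝ} {w : W}

theorem apply_eq_sum_simpleRoot (b : LinearMap.BilinForm ℝ (B → ℝ)) (x y : B → ℝ) :
    b x y = ∑ j, x j * b (simpleRoot j) y := by
  classical
  conv_lhs => rw [← (Pi.basisFun ℝ B).sum_repr x]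
  simp only [map_sum, map_smul, LinearMap.sum_apply, LinearMap.smul_apply, smul_eq_mul]
  simp [simpleRoot, Pi.basisFun_apply]

include hb

theorem exists_forall_simpleRoot_pos [Finite W] (hv : ∀ β, IsRoot cs β → b β v ≠ 0) :
    ∃ g, ∀ i, 0 < b (simpleRoot i) (titsRep cs g v) := by
  obtain ⟨g, hg⟩ := Finite.exists_max fun g => ∑ j, titsRep cs g v j
  refine ⟨g, fun i => ?_⟩
  have hne : b (simpleRoot i) (titsRep cs g v) ≠ 0 := by
    rw [← hb.apply_apply g⁻¹, (titsRep cs).inv_self_apply]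
    exact hv _ ((isRoot_simpleRoot i).titsRep_apply _)
  have hcoroot : 0 ≤ simpleCoroot M i (titsRep cs g v) := by
    have hmax := hg (cs.simple i * g)
    have hsum : ∑ j, simpleRoot i j = 1 := by
      rw [Finset.sum_eq_single i (fun j _ hj => simpleRoot_of_ne hj) (by simp), simpleRoot_self]
    simp only [map_mul, Module.End.mul_apply, titsRep_simple_apply, Pi.sub_apply, Pi.smul_apply,
      smul_eq_mul, Finset.sum_sub_distrib, ← Finset.mul_sum, hsum] at hmax
    linarith
  have hmul := hb.root_functional_mul (simpleCoroot_self i) (titsRep_simple_apply cs i)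
    (titsRep cs g v)
  have hpos := hb.pos _ (simpleRoot_ne_zero i)
  refine lt_of_le_of_ne ?_ hne.symm
  linarith [mul_nonneg hcoroot hpos.le]

theorem eq_one_of_titsRep_apply_eq_self (hv : ∀ i, 0 < b (simpleRoot i) v)
    (hw : titsRep cs w v = v) : w = 1 := by
  refine eq_one_of_forall_titsRep_simpleRoot_nonneg (cs := cs) fun i => ?_
  refine ((isRoot_simpleRoot i).titsRep_apply w).nonneg_or_neg_nonneg.resolve_right fun hneg => ?_
  have hle : 0 ≤ b (-titsRep cs w (simpleRoot i)) v := by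
    rw [apply_eq_sum_simpleRoot]
    exact Finset.sum_nonneg fun j _ => mul_nonneg (hneg j) (hv j).le
  rw [map_neg, LinearMap.neg_apply] at hle
  nth_rewrite 1 [← hw] at hle
  rw [hb.apply_apply] at hle
  linarith [hv i]

end Dominance

section Carter

variable [Fintype B] {cs : CoxeterSystem M W} {u w t c : W} {β : B → ℝ}

/-- Otherwise `w` would fix a vector on no reflecting hyperplane, hence a conjugate of `w` would
fix an interior point of the dominant chamber. -/
theorem exists_isRoot_mem_movedSpace [Finite W] (hw : w ≠ 1) :
    ∃ β, IsRoot cs β ∧ β ∈ movedSpace (titsRep cs) w := by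
  by_contra! hno
  obtain ⟨b, hb⟩ := exists_isInvariantScalarProduct (titsRep cs)
  have hroot (p : W × B) :
      ∃ x ∈ (titsRep cs w).fixedSubmodule, b (titsRep cs p.1 (simpleRoot p.2)) x ≠ 0 := by
    by_contra! hx
    exact hno _ ⟨p.1, p.2, rfl⟩
      (hb.mem_movedSpace_of_forall fun x hx' => (hb.symm _ _).trans (hx x hx'))
  obtain ⟨v, hvw, hv⟩ := Module.Dual.exists_forall_mem_ne_zero_of_forall_exists _
    (fun p : W × B => b (titsRep cs p.1 (simpleRoot p.2))) hroot
  obtain ⟨g, hg⟩ := exists_forall_simpleRoot_pos hb (v := v) (by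
    rintro _ ⟨g, i, rfl⟩
    exact hv (g, i))
  have hconj : g * w * g⁻¹ = 1 := by
    refine eq_one_of_titsRep_apply_eq_self hb hg ?_
    rw [map_mul, map_mul, Module.End.mul_apply, Module.End.mul_apply,
      (titsRep cs).inv_self_apply, LinearMap.mem_fixedSubmodule_iff.1 hvw]
  exact hw (conj_eq_one_iff.1 hconj)

theorem finrank_movedSpace_le_rlen (w : W) :
    Module.finrank ℝ (movedSpace (titsRep cs) w) ≤ rlen cs w := by
  obtain ⟨l, hl, hlen, rfl⟩ := exists_reflections_length_eq_rlen cs w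
  rw [← hlen]
  clear hlen
  induction l with
  | nil => rw [List.prod_nil, movedSpace_one, finrank_bot]; exact Nat.zero_le _
  | cons t l ih =>
    obtain ⟨β, hβ⟩ := exists_actsAsReflection_of_isReflection (hl t List.mem_cons_self)
    have ht : Module.finrank ℝ (movedSpace (titsRep cs) t) = 1 := by
      rw [hβ.movedSpace_eq, finrank_span_singleton hβ.ne_zero]
    have hle := finrank_movedSpace_mul_le (ρ := titsRep cs) t l.prod
    have hl' := ih fun r hr => hl r (List.mem_cons_of_mem _ hr)
    rw [List.prod_cons, List.length_cons]
    omega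

variable [Finite W]

theorem finrank_movedSpace_mul_lt (ht : ActsAsReflection (titsRep cs) t β)
    (hβ : β ∈ movedSpace (titsRep cs) w) :
    Module.finrank ℝ (movedSpace (titsRep cs) (t * w)) <
      Module.finrank ℝ (movedSpace (titsRep cs) w) := by
  obtain ⟨b, hb⟩ := exists_isInvariantScalarProduct (titsRep cs)
  have hlt := Submodule.finrank_lt_finrank_of_lt (hb.fixedSubmodule_lt ht hβ)
  have hw := finrank_movedSpace_add_finrank_fixedSubmodule (ρ := titsRep cs) w
  have htw := finrank_movedSpace_add_finrank_fixedSubmodule (ρ := titsRep cs) (t * w)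
  omega

/-- Carter's lemma. -/
theorem rlen_eq_finrank_movedSpace (w : W) :
    rlen cs w = Module.finrank ℝ (movedSpace (titsRep cs) w) := by
  refine le_antisymm ?_ (finrank_movedSpace_le_rlen w)
  induction hn : Module.finrank ℝ (movedSpace (titsRep cs) w) using Nat.strong_induction_on
    generalizing w with
  | _ n ih =>
  subst hn
  rcases eq_or_ne w 1 with rfl | hw
  · rw [rlen_one]; exact Nat.zero_le _
  obtain ⟨β, hβ, hβw⟩ := exists_isRoot_mem_movedSpace (cs := cs) hw
  obtain ⟨t, ht, htβ⟩ := hβ.exists_actsAsReflection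
  have hlt := finrank_movedSpace_mul_lt htβ hβw
  have hle := ih _ hlt (t * w) rfl
  have := rlen_le_rlen_mul_add_one ht w
  omega

theorem rlen_mul_add_one_of_mem_movedSpace (ht : cs.IsReflection t)
    (htβ : ActsAsReflection (titsRep cs) t β) (hβ : β ∈ movedSpace (titsRep cs) w) :
    rlen cs (t * w) + 1 = rlen cs w := by
  have hlt := finrank_movedSpace_mul_lt htβ hβ
  rw [← rlen_eq_finrank_movedSpace, ← rlen_eq_finrank_movedSpace] at hlt
  have := rlen_le_rlen_mul_add_one ht w
  omega

theorem rle_of_mem_movedSpace (ht : cs.IsReflection t)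
    (htβ : ActsAsReflection (titsRep cs) t β) (hβ : β ∈ movedSpace (titsRep cs) w) :
    rle cs t w := by
  apply rle_of_rlen_add_le
  rw [ht.inv, ← rlen_mul_add_one_of_mem_movedSpace ht htβ hβ, add_comm]
  exact Nat.add_le_add_left (rlen_le_one_of_isReflection ht) _

theorem rle.movedSpace_eq_sup (h : rle cs u w) :
    movedSpace (titsRep cs) w = movedSpace (titsRep cs) u ⊔ movedSpace (titsRep cs) (u⁻¹ * w) := by
  simp only [rle, rlen_eq_finrank_movedSpace] at h
  rw [← movedSpace_mul_eq_sup (by rwa [mul_inv_cancel_left]), mul_inv_cancel_left]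

theorem rle.movedSpace_le (h : rle cs u w) :
    movedSpace (titsRep cs) u ≤ movedSpace (titsRep cs) w :=
  h.movedSpace_eq_sup ▸ le_sup_left

theorem rle_of_movedSpace_le (hu : rle cs u c) (hw : rle cs w c)
    (h : movedSpace (titsRep cs) u ≤ movedSpace (titsRep cs) w) : rle cs u w := by
  apply rle_of_rlen_add_le
  unfold rle at hu hw
  simp only [rlen_eq_finrank_movedSpace] at hu hw ⊢
  exact finrank_movedSpace_add_finrank_movedSpace_inv_mul_le hu hw h

theorem movedSpace_eq_sup_of_mem (ht : cs.IsReflection t)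
    (htβ : ActsAsReflection (titsRep cs) t β) (hβ : β ∈ movedSpace (titsRep cs) w) :
    movedSpace (titsRep cs) w = Submodule.span ℝ {β} ⊔ movedSpace (titsRep cs) (t * w) := by
  rw [(rle_of_mem_movedSpace ht htβ hβ).movedSpace_eq_sup, ht.inv, htβ.movedSpace_eq]

theorem movedSpace_le_span_posRoots (w : W) :
    movedSpace (titsRep cs) w ≤ Submodule.span ℝ (posRoots cs (movedSpace (titsRep cs) w)) := by
  induction hn : rlen cs w using Nat.strong_induction_on generalizing w with
  | _ n ih =>
  subst hn
  rcases eq_or_ne w 1 with rfl | hw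
  · rw [movedSpace_one]; exact bot_le
  obtain ⟨β, hβ, hβw⟩ := exists_isRoot_mem_movedSpace (cs := cs) hw
  obtain ⟨t, ht, htβ⟩ := hβ.exists_actsAsReflection
  have hsup := movedSpace_eq_sup_of_mem ht htβ hβw
  have htail := ih _ (by rw [← rlen_mul_add_one_of_mem_movedSpace ht htβ hβw]; omega) (t * w) rfl
  have hle : movedSpace (titsRep cs) (t * w) ≤ movedSpace (titsRep cs) w := hsup ▸ le_sup_right
  conv_lhs => rw [hsup]
  refine sup_le ((Submodule.span_singleton_le_iff_mem _ _).2 ?_)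
    (htail.trans (Submodule.span_mono fun x hx => ⟨hx.1, hx.2.1, hle hx.2.2⟩))
  rcases hβ.nonneg_or_neg_nonneg with h | h
  · exact Submodule.subset_span ⟨hβ, h, hβw⟩
  · rw [← neg_neg β]
    exact Submodule.neg_mem _ (Submodule.subset_span ⟨hβ.neg, h, Submodule.neg_mem _ hβw⟩)

end Carter

/-! ### Cones -/

section Hull

open PointedCone

variable {V : Type*} [AddCommGroup V] [Module ℝ V] {D P : Set V} {x b d z : V}
  {f : Module.Dual ℝ V}

theorem nonneg_and_mem_hull_sep (hf : ∀ d ∈ D, 0 ≤ f d) (hx : x ∈ hull ℝ D) :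
    0 ≤ f x ∧ (f x = 0 → x ∈ hull ℝ {d ∈ D | f d = 0}) := by
  induction hx using Submodule.span_induction with
  | mem d hd => exact ⟨hf d hd, fun h => subset_hull ⟨hd, h⟩⟩
  | zero => exact ⟨(map_zero f).ge, fun _ => zero_mem _⟩
  | add x y _ _ ihx ihy =>
    rw [map_add]
    refine ⟨add_nonneg ihx.1 ihy.1, fun h => ?_⟩
    obtain ⟨hx, hy⟩ := (add_eq_zero_iff_of_nonneg ihx.1 ihy.1).1 h
    exact add_mem (ihx.2 hx) (ihy.2 hy)
  | smul c x _ ih =>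
    rw [Nonneg.mk_smul, map_smul, smul_eq_mul]
    refine ⟨mul_nonneg c.2 ih.1, fun h => ?_⟩
    rcases mul_eq_zero.1 h with h | h
    · rw [h, zero_smul]; exact zero_mem _
    · exact PointedCone.smul_mem _ c.2 (ih.2 h)

theorem apply_nonneg_of_mem_hull (hf : ∀ d ∈ D, 0 ≤ f d) (hx : x ∈ hull ℝ D) : 0 ≤ f x :=
  (nonneg_and_mem_hull_sep hf hx).1

theorem mem_hull_sep_of_apply_eq_zero (hf : ∀ d ∈ D, 0 ≤ f d) (hx : x ∈ hull ℝ D)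
    (h0 : f x = 0) : x ∈ hull ℝ {d ∈ D | f d = 0} :=
  (nonneg_and_mem_hull_sep hf hx).2 h0

theorem eq_zero_of_mem_hull_of_apply_eq_zero (hf : ∀ d ∈ D, 0 < f d) (hx : x ∈ hull ℝ D)
    (h0 : f x = 0) : x = 0 := by
  have hempty : {d ∈ D | f d = 0} = ∅ :=
    Set.eq_empty_of_forall_notMem fun d hd => (hf d hd.1).ne' hd.2
  simpa [hempty] using mem_hull_sep_of_apply_eq_zero (fun d hd => (hf d hd).le) hx h0

theorem exists_minimal_generators (hP : P.Finite) :
    ∃ D ⊆ P, P ⊆ hull ℝ D ∧ ∀ d ∈ D, d ∉ hull ℝ (D \ {d}) := by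
  obtain ⟨D, ⟨hDP, hPD⟩, hmin⟩ := WellFounded.has_min (measure Set.ncard).wf
    {D : Set V | D ⊆ P ∧ P ⊆ hull ℝ D} ⟨P, subset_rfl, subset_hull⟩
  refine ⟨D, hDP, hPD, fun d hd hdD => hmin (D \ {d}) ⟨Set.sdiff_subset.trans hDP, ?_⟩
    (Set.ncard_sdiff_singleton_lt_of_mem hd (hP.subset hDP))⟩
  refine hPD.trans (Submodule.span_le.2 fun e he => ?_)
  rcases eq_or_ne e d with rfl | hne
  · exact hdD
  · exact subset_hull ⟨he, hne⟩

/-- A generator is redundant when some multiple of it is a nontrivial conic combination involving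
the other ones. -/
theorem mem_hull_sdiff_singleton (hf : ∀ d ∈ D, 0 < f d) (hd : d ∈ D)
    (hb : b ∈ hull ℝ (D \ {d})) (hb0 : b ≠ 0) (hz : z ∈ hull ℝ D) {a : ℝ} (h : a • d = b + z) :
    d ∈ hull ℝ (D \ {d}) := by
  rw [← Set.insert_eq_of_mem hd, ← Set.insert_sdiff_singleton] at hz
  obtain ⟨c, z', hz', rfl⟩ := Submodule.mem_span_insert.1 hz
  have hf' : ∀ e ∈ D \ {d}, 0 < f e := fun e he => hf e he.1
  have hd' : (a - c) • d = b + z' := by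
    rw [sub_smul, h, Nonneg.mk_smul]
    abel
  have hpos : 0 < a - c := by
    have hfb := lt_of_le_of_ne (apply_nonneg_of_mem_hull (fun e he => (hf' e he).le) hb)
      fun h0 => hb0 (eq_zero_of_mem_hull_of_apply_eq_zero hf' hb h0.symm)
    have hfz := apply_nonneg_of_mem_hull (fun e he => (hf' e he).le) hz'
    have hfd := congrArg f hd'
    rw [map_smul, map_add, smul_eq_mul] at hfd
    exact pos_of_mul_pos_left (hfd ▸ add_pos_of_pos_of_nonneg hfb hfz) (hf d hd).le
  have hmem := PointedCone.smul_mem _ (inv_nonneg.2 hpos.le) (add_mem hb hz')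
  rwa [← hd', inv_smul_smul₀ hpos.ne'] at hmem

end Hull

/-! ### Cones of positive roots -/

section PosCone

open PointedCone

variable [Fintype B]

/-- The sum of the coordinates (the height, for a root): a functional positive on every positive
root. -/
noncomputable def coordSum : Module.Dual ℝ (B → ℝ) := ∑ j, LinearMap.proj j

theorem coordSum_pos {x : B → ℝ} (hx : 0 ≤ x) (h0 : x ≠ 0) : 0 < coordSum x := by
  obtain ⟨j, hj⟩ := Function.ne_iff.1 h0
  simpa [coordSum, LinearMap.sum_apply] using
    Finset.sum_pos' (fun j _ => hx j) ⟨j, Finset.mem_univ j, (hx j).lt_of_ne' hj⟩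

/-- The cone generated by the positive roots lying in `U`. -/
noncomputable def posCone (cs : CoxeterSystem M W) (U : Submodule ℝ (B → ℝ)) :
    PointedCone ℝ (B → ℝ) :=
  hull ℝ (posRoots cs U)

variable {cs : CoxeterSystem M W} {U : Submodule ℝ (B → ℝ)} {D : Set (B → ℝ)} {d d' : B → ℝ}
  {b : LinearMap.BilinForm ℝ (B → ℝ)}

theorem coordSum_pos_of_mem_posRoots (hd : d ∈ posRoots cs U) : 0 < coordSum d :=
  coordSum_pos hd.2.1 hd.1.ne_zero

theorem apply_nonpos_of_minimal_generators (hb : IsInvariantScalarProduct (titsRep cs) b)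
    (hD : D ⊆ posRoots cs U) (hU : posRoots cs U ⊆ hull ℝ D)
    (hmin : ∀ d ∈ D, d ∉ hull ℝ (D \ {d})) (hd : d ∈ D) (hd' : d' ∈ D) (hne : d ≠ d') :
    b d d' ≤ 0 := by
  by_contra! hpos
  have hsum : ∀ d ∈ D, 0 < coordSum d := fun d hd => coordSum_pos_of_mem_posRoots (hD hd)
  obtain ⟨hr, -, hdU⟩ := hD hd
  obtain ⟨hr', -, hd'U⟩ := hD hd'
  obtain ⟨t, -, f, hf, ht⟩ := hr'.exists_actsAsReflection
  have htd := ht d ▸ hr.titsRep_apply t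
  have hfd : 0 < f d := by
    have hmul := hb.root_functional_mul hf ht d
    rw [hb.symm d' d] at hmul
    exact pos_of_mul_pos_left (hmul ▸ mul_pos two_pos hpos) (hb.pos d' hr'.ne_zero).le
  have htdU := Submodule.sub_mem U hdU (Submodule.smul_mem U (f d) hd'U)
  rcases htd.nonneg_or_neg_nonneg with h | h
  · exact hmin d hd (mem_hull_sdiff_singleton hsum hd (b := f d • d') (a := 1)
      (PointedCone.smul_mem _ hfd.le (subset_hull ⟨hd', hne.symm⟩))
      (smul_ne_zero hfd.ne' hr'.ne_zero) (hU ⟨htd, h, htdU⟩) (by module))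
  · exact hmin d' hd' (mem_hull_sdiff_singleton hsum hd' (b := d) (a := f d)
      (subset_hull ⟨hd, hne⟩) hr.ne_zero (hU ⟨htd.neg, h, Submodule.neg_mem _ htdU⟩) (by module))

theorem exists_linearIndepOn_posRoots_subset_hull [Finite W] (cs : CoxeterSystem M W)
    (U : Submodule ℝ (B → ℝ)) :
    ∃ D ⊆ posRoots cs U, posRoots cs U ⊆ hull ℝ D ∧ LinearIndepOn ℝ id D := by
  obtain ⟨b, hb⟩ := exists_isInvariantScalarProduct (titsRep cs)
  obtain ⟨D, hD, hU, hmin⟩ := exists_minimal_generators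
    ((finite_setOf_isRoot (cs := cs)).subset fun β (hβ : β ∈ posRoots cs U) => hβ.1)
  exact ⟨D, hD, hU, b.linearIndependent_of_pairwise_le_zero hb.pos coordSum _
    (fun d => coordSum_pos_of_mem_posRoots (hD d.2)) fun d d' hne =>
      apply_nonpos_of_minimal_generators hb hD hU hmin d.2 d'.2 (Subtype.coe_ne_coe.2 hne)⟩

theorem posCone_mono {V : Submodule ℝ (B → ℝ)} (h : U ≤ V) : posCone cs U ≤ posCone cs V :=
  Submodule.span_mono fun _ hβ => ⟨hβ.1, hβ.2.1, h hβ.2.2⟩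

theorem mem_of_mem_posCone {x : B → ℝ} (hx : x ∈ posCone cs U) : x ∈ U :=
  (Submodule.span_le (p := PointedCone.ofSubmodule U)).2 (fun _ hβ => hβ.2.2) hx

theorem nonneg_of_mem_posCone {x : B → ℝ} (hx : x ∈ posCone cs U) : 0 ≤ x := fun j =>
  apply_nonneg_of_mem_hull (f := LinearMap.proj j) (fun _ hβ => hβ.2.1 j) hx

end PosCone

/-! ### Words without repeated letters -/

section NodupWord

variable [Fintype B] {cs : CoxeterSystem M W} {l : List B} {i : B} {x : B → ℝ} {u : W}

theorem titsRep_wordProd_apply_of_notMem (hi : i ∉ l) (x : B → ℝ) :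
    titsRep cs (cs.wordProd l) x i = x i := by
  induction l with
  | nil => simp
  | cons j l ih =>
    rw [List.mem_cons, not_or] at hi
    rw [cs.wordProd_cons, map_mul, Module.End.mul_apply, titsRep_simple_apply_of_ne cs hi.1,
      ih hi.2]

theorem apply_eq_zero_of_mem_movedSpace_wordProd (hi : i ∉ l)
    (hx : x ∈ movedSpace (titsRep cs) (cs.wordProd l)) : x i = 0 := by
  obtain ⟨v, rfl⟩ := mem_movedSpace.1 hx
  simp [titsRep_wordProd_apply_of_notMem hi]

theorem simpleCoroot_apply_eq_zero (hl : l.Nodup)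
    (hx : x ∈ (titsRep cs (cs.wordProd l)).fixedSubmodule) (hi : i ∈ l) :
    simpleCoroot M i x = 0 := by
  induction l with
  | nil => simp at hi
  | cons j l ih =>
    rw [List.nodup_cons] at hl
    rw [LinearMap.mem_fixedSubmodule_iff, cs.wordProd_cons, map_mul, Module.End.mul_apply] at hx
    have htail : titsRep cs (cs.wordProd l) x = titsRep cs (cs.simple j) x := by
      have h := (titsRep cs).inv_self_apply (cs.simple j) (titsRep cs (cs.wordProd l) x)
      rwa [hx, cs.inv_simple, eq_comm] at h
    have hj : simpleCoroot M j x = 0 := by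
      have h := congrFun htail j
      rw [titsRep_wordProd_apply_of_notMem hl.1, titsRep_simple_apply, eq_comm] at h
      simpa using h
    rcases List.mem_cons.1 hi with rfl | hi
    · exact hj
    · refine ih hl.2 (LinearMap.mem_fixedSubmodule_iff.2 ?_) hi
      rw [htail, titsRep_simple_apply, hj, zero_smul, sub_zero]

variable [Finite W]

theorem simpleRoot_mem_movedSpace_wordProd (hl : l.Nodup) (hi : i ∈ l) :
    simpleRoot i ∈ movedSpace (titsRep cs) (cs.wordProd l) := by
  obtain ⟨b, hb⟩ := exists_isInvariantScalarProduct (titsRep cs)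
  refine hb.mem_movedSpace_of_forall fun x hx => ?_
  have hmul := hb.root_functional_mul (simpleCoroot_self i) (titsRep_simple_apply cs i) x
  rw [simpleCoroot_apply_eq_zero hl hx hi, hb.symm _ x] at hmul
  linarith

theorem eq_zero_of_mem_fixedSubmodule_wordProd (hl : l.Nodup)
    (hx : x ∈ (titsRep cs (cs.wordProd l)).fixedSubmodule) (hsupp : ∀ j ∉ l, x j = 0) :
    x = 0 := by
  obtain ⟨b, hb⟩ := exists_isInvariantScalarProduct (titsRep cs)
  refine hb.eq_zero_of_apply_self ?_
  rw [apply_eq_sum_simpleRoot]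
  refine Finset.sum_eq_zero fun j _ => ?_
  by_cases hj : j ∈ l
  · rw [hb.symm, hb.apply_eq_zero hx (simpleRoot_mem_movedSpace_wordProd hl hj), mul_zero]
  · rw [hsupp j hj, zero_mul]

theorem rle.apply_eq_zero (hu : rle cs u (cs.wordProd l)) (hi : i ∉ l)
    (hx : x ∈ movedSpace (titsRep cs) u) : x i = 0 :=
  apply_eq_zero_of_mem_movedSpace_wordProd hi (hu.movedSpace_le hx)

theorem simple_rle (h : simpleRoot i ∈ movedSpace (titsRep cs) u) : rle cs (cs.simple i) u :=
  rle_of_mem_movedSpace (cs.isReflection_simple i) (actsAsReflection_simple i) h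

theorem movedSpace_eq_sup_simple (h : simpleRoot i ∈ movedSpace (titsRep cs) u) :
    movedSpace (titsRep cs) u =
      Submodule.span ℝ {simpleRoot i} ⊔ movedSpace (titsRep cs) (cs.simple i * u) :=
  movedSpace_eq_sup_of_mem (cs.isReflection_simple i) (actsAsReflection_simple i) h

end NodupWord

section NodupCons

variable {cs : CoxeterSystem M W} {l : List B} {i : B} {u v : W} [Finite W]

theorem simple_rle_wordProd_cons [Finite B] (hl : (i :: l).Nodup) :
    rle cs (cs.simple i) (cs.wordProd (i :: l)) :=
  have := Fintype.ofFinite B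
  simple_rle (simpleRoot_mem_movedSpace_wordProd hl List.mem_cons_self)

variable [Fintype B]

theorem simple_mul_rle_wordProd (hl : (i :: l).Nodup) (hu : rle cs u (cs.wordProd (i :: l)))
    (hi : simpleRoot i ∈ movedSpace (titsRep cs) u) :
    rle cs (cs.simple i * u) (cs.wordProd l) := by
  simpa [cs.wordProd_cons] using
    (inv_mul_rle_inv_mul_iff (simple_rle hi) (simple_rle_wordProd_cons hl)).2 hu

theorem simple_mul_rle_wordProd_cons (hl : (i :: l).Nodup) (hv : rle cs v (cs.wordProd l)) :
    rle cs (cs.simple i * v) (cs.wordProd (i :: l)) ∧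
      simpleRoot i ∈ movedSpace (titsRep cs) (cs.simple i * v) := by
  obtain ⟨hi, hc⟩ := rle_mul_of_rle_inv_mul (simple_rle_wordProd_cons (cs := cs) hl) (y := v)
    (by rwa [cs.wordProd_cons, inv_mul_cancel_left])
  refine ⟨hc, hi.movedSpace_le ?_⟩
  rw [(actsAsReflection_simple i).movedSpace_eq]
  exact Submodule.mem_span_singleton_self _

end NodupCons

/-! ### Deleting a simple root from a cone -/

section Face

open PointedCone

variable {cs : CoxeterSystem M W} {U : Submodule ℝ (B → ℝ)} {D : Set (B → ℝ)} {i : B}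
  {x : B → ℝ}

theorem exists_smul_simpleRoot_mem [Finite B] (hD : ∀ d ∈ D, 0 ≤ d)
    (hi : simpleRoot i ∈ hull ℝ D) : ∃ c : ℝ, c ≠ 0 ∧ c • simpleRoot i ∈ D := by
  classical
  cases nonempty_fintype B
  let f : Module.Dual ℝ (B → ℝ) := ∑ j ∈ Finset.univ.erase i, LinearMap.proj j
  have hf (y : B → ℝ) : f y = ∑ j ∈ Finset.univ.erase i, y j := by simp [f, LinearMap.sum_apply]
  have hi' := mem_hull_sep_of_apply_eq_zero
    (fun d hd => (hf d).symm ▸ Finset.sum_nonneg fun j _ => hD d hd j) hi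
    ((hf _).trans (Finset.sum_eq_zero fun j hj => simpleRoot_of_ne (Finset.ne_of_mem_erase hj)))
  obtain ⟨d, ⟨hd, hd0⟩, hdi⟩ : ∃ d ∈ {d ∈ D | f d = 0}, d i ≠ 0 := by
    by_contra! h
    have := apply_nonneg_of_mem_hull (f := -LinearMap.proj i) (fun d hd => by simp [h d hd]) hi'
    norm_num at this
  refine ⟨d i, hdi, ?_⟩
  convert hd using 1
  rw [hf, Finset.sum_eq_zero_iff_of_nonneg fun j _ => hD d hd j] at hd0
  funext j
  by_cases hj : j = i
  · subst hj; simp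
  · simp [simpleRoot_of_ne hj, hd0 j (by simp [hj])]

variable [Fintype B]

theorem apply_eq_zero_of_linearIndepOn (hUspan : U ≤ Submodule.span ℝ (posRoots cs U))
    (hUi : ∀ y ∈ U, y i = 0)
    (hD : D ⊆ posRoots cs (Submodule.span ℝ {simpleRoot i} ⊔ U))
    (hcone : posRoots cs (Submodule.span ℝ {simpleRoot i} ⊔ U) ⊆ hull ℝ D)
    (hind : LinearIndepOn ℝ id D) {c : ℝ} (hc : c ≠ 0) (hcD : c • simpleRoot i ∈ D)
    {d : B → ℝ} (hd : d ∈ D) (hne : d ≠ c • simpleRoot i) : d i = 0 := by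
  by_contra hdi
  have hnotMem : d ∉ Submodule.span ℝ (D \ {d}) :=
    (hind.mono Set.sdiff_subset).notMem_span_iff_id.2
      ⟨by rwa [Set.insert_sdiff_singleton, Set.insert_eq_of_mem hd], fun h => h.2 rfl⟩
  suffices hle : Submodule.span ℝ {simpleRoot i} ⊔ U ≤ Submodule.span ℝ (D \ {d}) from
    hnotMem (hle (hD hd).2.2)
  refine sup_le ((Submodule.span_singleton_le_iff_mem _ _).2 ?_)
    (hUspan.trans (Submodule.span_le.2 fun β hβ => ?_))
  · rw [← inv_smul_smul₀ hc (simpleRoot i)]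
    exact Submodule.smul_mem _ _ (Submodule.subset_span ⟨hcD, hne.symm⟩)
  · have hmem := mem_hull_sep_of_apply_eq_zero (f := LinearMap.proj i)
      (fun e he => (hD he).2.1 i)
      (hcone ⟨hβ.1, hβ.2.1, Submodule.mem_sup_right hβ.2.2⟩) (hUi β hβ.2.2)
    have hspan : β ∈ Submodule.span ℝ {e ∈ D | e i = 0} := hull_le_span ℝ _ hmem
    refine Submodule.span_mono ?_ hspan
    exact fun e he => ⟨he.1, fun h : e = d => hdi (h ▸ he.2)⟩

/-- In the simple system of `ℝ αᵢ ⊕ U` only a multiple of `αᵢ` has a nonzero `i`-th coordinate. -/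
theorem sub_smul_simpleRoot_mem_posCone [Finite W]
    (hUspan : U ≤ Submodule.span ℝ (posRoots cs U)) (hUi : ∀ y ∈ U, y i = 0)
    (hx : x ∈ posCone cs (Submodule.span ℝ {simpleRoot i} ⊔ U)) :
    x - x i • simpleRoot i ∈ posCone cs U := by
  obtain ⟨D, hD, hcone, hind⟩ := exists_linearIndepOn_posRoots_subset_hull cs
    (Submodule.span ℝ {simpleRoot i} ⊔ U)
  obtain ⟨c, hc, hcD⟩ := exists_smul_simpleRoot_mem (fun d hd => (hD hd).2.1)
    (hcone ⟨isRoot_simpleRoot i, simpleRoot_nonneg i,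
      Submodule.mem_sup_left (Submodule.mem_span_singleton_self _)⟩)
  have hU {d : B → ℝ} (hd : d ∈ Submodule.span ℝ {simpleRoot i} ⊔ U) (h0 : d i = 0) : d ∈ U := by
    obtain ⟨_, hk, y, hy, rfl⟩ := Submodule.mem_sup.1 hd
    obtain ⟨k, rfl⟩ := Submodule.mem_span_singleton.1 hk
    have hk : k = 0 := by simpa [hUi y hy] using h0
    rwa [hk, zero_smul, zero_add]
  have hxD : x ∈ hull ℝ D := Submodule.span_le.2 hcone hx
  clear hx
  induction hxD using Submodule.span_induction with
  | mem d hd =>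
    rcases eq_or_ne d (c • simpleRoot i) with rfl | hne
    · simp
    · have h0 := apply_eq_zero_of_linearIndepOn hUspan hUi hD hcone hind hc hcD hd hne
      rw [h0, zero_smul, sub_zero]
      exact subset_hull ⟨(hD hd).1, (hD hd).2.1, hU (hD hd).2.2 h0⟩
  | zero => simp
  | add x y _ _ ihx ihy =>
    convert add_mem ihx ihy using 1
    rw [Pi.add_apply]
    module
  | smul a x _ ih =>
    convert Submodule.smul_mem _ a ih using 1
    rw [Nonneg.mk_smul, Nonneg.mk_smul, Pi.smul_apply, smul_eq_mul]
    module

end Face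

/-! ### The least moved space around a vector -/

theorem wordProd_append_singleton (cs : CoxeterSystem M W) (l : List B) (i : B) :
    cs.wordProd (l ++ [i]) = cs.simple i * cs.wordProd (i :: l) * (cs.simple i)⁻¹ := by
  rw [cs.wordProd_append, cs.wordProd_singleton, cs.wordProd_cons, cs.inv_simple,
    cs.simple_mul_simple_cancel_left]

section Carrier

variable [Fintype B] {cs : CoxeterSystem M W} {u c : W} {i : B} {l : List B} {x : B → ℝ}

/-- The vector `x` has a carrier below `c`: some `u₀ ≤ c` whose moved space contains `x` and is
contained in the moved space of every `u ≤ c` for which `x` lies in the cone of positive roots of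
that space. -/
def HasCarrier (cs : CoxeterSystem M W) (c : W) (x : B → ℝ) : Prop :=
  ∃ u₀, rle cs u₀ c ∧ x ∈ movedSpace (titsRep cs) u₀ ∧
    ∀ u, rle cs u c → x ∈ posCone cs (movedSpace (titsRep cs) u) →
      movedSpace (titsRep cs) u₀ ≤ movedSpace (titsRep cs) u

theorem hasCarrier_zero (c : W) : HasCarrier cs c 0 :=
  ⟨1, one_rle c, Submodule.zero_mem _, fun u _ _ => by rw [movedSpace_one]; exact bot_le⟩

theorem IsRoot.titsRep_simple_nonneg {β : B → ℝ} (hβ : IsRoot cs β) (h0 : 0 ≤ β)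
    (hi : ∀ a : ℝ, a • β ≠ simpleRoot i) : 0 ≤ titsRep cs (cs.simple i) β := by
  refine (hβ.titsRep_apply _).nonneg_or_neg_nonneg.resolve_right fun hneg => ?_
  have hβi : β = β i • simpleRoot i := by
    funext j
    by_cases hj : j = i
    · subst hj; simp
    · have := hneg j
      rw [Pi.neg_apply, titsRep_simple_apply_of_ne cs hj] at this
      simpa [simpleRoot_of_ne hj] using le_antisymm (neg_nonneg.1 this) (h0 j)
  have hne : β i ≠ 0 := fun h => hβ.ne_zero (by rw [hβi, h, zero_smul])
  apply hi (β i)⁻¹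
  nth_rewrite 2 [hβi]
  exact inv_smul_smul₀ hne _

theorem titsRep_simple_mem_posCone_of_notMem (hi : simpleRoot i ∉ movedSpace (titsRep cs) u)
    (hx : x ∈ posCone cs (movedSpace (titsRep cs) u)) :
    titsRep cs (cs.simple i) x ∈
      posCone cs (movedSpace (titsRep cs) (cs.simple i * u * (cs.simple i)⁻¹)) := by
  induction hx using Submodule.span_induction with
  | mem β hβ =>
    obtain ⟨hr, h0, hβu⟩ := hβ
    refine PointedCone.subset_hull ⟨hr.titsRep_apply _, hr.titsRep_simple_nonneg h0 fun a ha => ?_,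
      apply_mem_movedSpace_conj.2 hβu⟩
    exact hi (ha ▸ Submodule.smul_mem _ a hβu)
  | zero => rw [map_zero]; exact zero_mem _
  | add x y _ _ ihx ihy => rw [map_add]; exact add_mem ihx ihy
  | smul a x _ ih =>
    rw [Nonneg.mk_smul, map_smul]
    exact PointedCone.smul_mem _ a.2 ih

theorem movedSpace_le_movedSpace_simple_conj (hi : simpleRoot i ∈ movedSpace (titsRep cs) u) :
    movedSpace (titsRep cs) u ≤
      movedSpace (titsRep cs) (cs.simple i * u * (cs.simple i)⁻¹) := by
  intro y hy
  rw [mem_movedSpace_conj, cs.inv_simple, titsRep_simple_apply]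
  exact Submodule.sub_mem _ hy (Submodule.smul_mem _ _ hi)

variable [Finite W]

theorem sub_smul_simpleRoot_mem_posCone_simple_mul (hl : (i :: l).Nodup)
    (hu : rle cs u (cs.wordProd (i :: l))) (hi : simpleRoot i ∈ movedSpace (titsRep cs) u)
    (hx : x ∈ posCone cs (movedSpace (titsRep cs) u)) :
    x - x i • simpleRoot i ∈ posCone cs (movedSpace (titsRep cs) (cs.simple i * u)) := by
  rw [movedSpace_eq_sup_simple hi] at hx
  exact sub_smul_simpleRoot_mem_posCone (movedSpace_le_span_posRoots _)
    (fun y hy => (simple_mul_rle_wordProd hl hu hi).apply_eq_zero (List.nodup_cons.1 hl).1 hy) hx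

theorem titsRep_simple_mem_posCone (hl : (i :: l).Nodup) (hu : rle cs u (cs.wordProd (i :: l)))
    (h0 : 0 ≤ titsRep cs (cs.simple i) x i)
    (hx : x ∈ posCone cs (movedSpace (titsRep cs) u)) :
    titsRep cs (cs.simple i) x ∈
      posCone cs (movedSpace (titsRep cs) (cs.simple i * u * (cs.simple i)⁻¹)) := by
  by_cases hi : simpleRoot i ∈ movedSpace (titsRep cs) u
  · have hconj := movedSpace_le_movedSpace_simple_conj hi
    have htail : movedSpace (titsRep cs) (cs.simple i * u) ≤ movedSpace (titsRep cs) u :=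
      movedSpace_eq_sup_simple hi ▸ le_sup_right
    have hdecomp : titsRep cs (cs.simple i) x =
        (x - x i • simpleRoot i) + titsRep cs (cs.simple i) x i • simpleRoot i := by
      simp only [titsRep_simple_apply, Pi.sub_apply, Pi.smul_apply, simpleRoot_self, smul_eq_mul]
      module
    rw [hdecomp]
    refine add_mem ?_ (PointedCone.smul_mem _ h0 (PointedCone.subset_hull
      ⟨isRoot_simpleRoot i, simpleRoot_nonneg i, hconj hi⟩))
    exact posCone_mono (htail.trans hconj)
      (sub_smul_simpleRoot_mem_posCone_simple_mul hl hu hi hx)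
  · exact titsRep_simple_mem_posCone_of_notMem hi hx

theorem hasCarrier_of_rotate (hl : (i :: l).Nodup) (h0 : 0 ≤ titsRep cs (cs.simple i) x i)
    (h : HasCarrier cs (cs.wordProd (l ++ [i])) (titsRep cs (cs.simple i) x)) :
    HasCarrier cs (cs.wordProd (i :: l)) x := by
  rw [wordProd_append_singleton] at h
  obtain ⟨u₀, hu₀, hx₀, hmin⟩ := h
  obtain ⟨v, rfl⟩ : ∃ v, u₀ = cs.simple i * v * (cs.simple i)⁻¹ :=
    ⟨(cs.simple i)⁻¹ * u₀ * cs.simple i, by group⟩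
  rw [rle_conj_iff] at hu₀
  rw [apply_mem_movedSpace_conj] at hx₀
  refine ⟨v, hu₀, hx₀, fun u hu hxu y hy => ?_⟩
  exact apply_mem_movedSpace_conj.1 (hmin _ ((rle_conj_iff _).2 hu)
    (titsRep_simple_mem_posCone hl hu h0 hxu) (apply_mem_movedSpace_conj.2 hy))

/-- Since `s_i x` is not nonnegative, every `u` admitted for `x` has `αᵢ` in its moved space. -/
theorem hasCarrier_of_tail (hl : (i :: l).Nodup) (h0 : titsRep cs (cs.simple i) x i < 0)
    (h : HasCarrier cs (cs.wordProd l) (x - x i • simpleRoot i)) :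
    HasCarrier cs (cs.wordProd (i :: l)) x := by
  obtain ⟨u₀, hu₀, hx₀, hmin⟩ := h
  obtain ⟨hle, hi₀⟩ := simple_mul_rle_wordProd_cons hl hu₀
  have hsup := movedSpace_eq_sup_simple hi₀
  rw [cs.simple_mul_simple_cancel_left] at hsup
  refine ⟨cs.simple i * u₀, hle, ?_, fun u hu hxu => ?_⟩
  · rw [hsup, ← add_sub_cancel (x i • simpleRoot i) x]
    exact Submodule.add_mem_sup (Submodule.smul_mem _ _ (Submodule.mem_span_singleton_self _)) hx₀
  · have hi : simpleRoot i ∈ movedSpace (titsRep cs) u := by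
      by_contra hi
      exact h0.not_ge (nonneg_of_mem_posCone (titsRep_simple_mem_posCone_of_notMem hi hxu) i)
    rw [hsup, movedSpace_eq_sup_simple hi]
    exact sup_le_sup_left (hmin _ (simple_mul_rle_wordProd hl hu hi)
      (sub_smul_simpleRoot_mem_posCone_simple_mul hl hu hi hxu)) _

end Carrier

section Rotation

variable {cs : CoxeterSystem M W} {i : B} {l : List B} {x : B → ℝ}

/-- The vectors with nonnegative coordinates supported on the letters of `l`. -/
def nonnegSupported (l : List B) : Set (B → ℝ) := {x | 0 ≤ x ∧ ∀ j ∉ l, x j = 0}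

theorem sub_smul_simpleRoot_mem_nonnegSupported (hx : x ∈ nonnegSupported (i :: l)) :
    x - x i • simpleRoot i ∈ nonnegSupported l := by
  refine ⟨fun j => ?_, fun j hj => ?_⟩ <;> by_cases h : j = i
  · subst h; simp
  · simpa [simpleRoot_of_ne h] using hx.1 j
  · subst h; simp
  · simpa [simpleRoot_of_ne h] using hx.2 j (by simp [h, hj])

variable [Fintype B]

theorem titsRep_simple_mem_nonnegSupported (hx : x ∈ nonnegSupported (i :: l))
    (h0 : 0 ≤ titsRep cs (cs.simple i) x i) :
    titsRep cs (cs.simple i) x ∈ nonnegSupported (l ++ [i]) := by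
  refine ⟨fun j => ?_, fun j hj => ?_⟩
  · by_cases h : j = i
    · exact h ▸ h0
    · exact (titsRep_simple_apply_of_ne cs h x).symm ▸ hx.1 j
  · simp only [List.mem_append, List.mem_singleton, not_or] at hj
    rw [titsRep_simple_apply_of_ne cs hj.2]
    exact hx.2 j (by simp [hj])

theorem rotate_induction {P : List B → (B → ℝ) → Prop}
    (hP : ∀ i l x, P (i :: l) x → P (l ++ [i]) (titsRep cs (cs.simple i) x)) {p q : List B}
    (h : P (p ++ q) x) : P (q ++ p) (titsRep cs (cs.wordProd p)⁻¹ x) := by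
  induction p generalizing q x with
  | nil => simpa using h
  | cons i p ih =>
    have hrot := hP i (p ++ q) x h
    rw [List.append_assoc] at hrot
    simpa [cs.wordProd_cons] using ih hrot

theorem rotate_pow_induction {P : List B → (B → ℝ) → Prop}
    (hP : ∀ i l x, P (i :: l) x → P (l ++ [i]) (titsRep cs (cs.simple i) x)) (h : P l x) (m : ℕ) :
    P l (titsRep cs ((cs.wordProd l)⁻¹ ^ m) x) := by
  induction m with
  | zero => simpa using h
  | succ m ih =>
    rw [pow_succ', map_mul, Module.End.mul_apply]
    simpa using rotate_induction hP (q := []) (by simpa using ih)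

variable [Finite W]

/-- The sum over the orbit is fixed by `cs.wordProd l`, hence zero. -/
theorem eq_zero_of_forall_pow_mem_nonnegSupported (hl : l.Nodup)
    (h : ∀ m, titsRep cs ((cs.wordProd l)⁻¹ ^ m) x ∈ nonnegSupported l) : x = 0 := by
  set c := (cs.wordProd l)⁻¹ with hc
  set X := ∑ m ∈ Finset.range (orderOf c), titsRep cs (c ^ m) x with hX
  have hcX : titsRep cs c X = X := by
    have hsum := Finset.sum_range_succ (fun m => titsRep cs (c ^ m) x) (orderOf c)
    rw [Finset.sum_range_succ', pow_zero, pow_orderOf_eq_one] at hsum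
    simpa only [X, map_sum, ← Module.End.mul_apply, ← map_mul, ← pow_succ'] using
      add_right_cancel hsum
  have hX0 : X = 0 := by
    refine eq_zero_of_mem_fixedSubmodule_wordProd (cs := cs) hl
      (LinearMap.mem_fixedSubmodule_iff.2 ?_) fun j hj => ?_
    · nth_rewrite 1 [← hcX]
      rw [hc, (titsRep cs).self_inv_apply]
    · rw [hX, Finset.sum_apply]
      exact Finset.sum_eq_zero fun m _ => (h m).2 j hj
  have hterm := (Finset.sum_eq_zero_iff_of_nonneg fun m _ => (h m).1).1 hX0 0
    (Finset.mem_range.2 (orderOf_pos c))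
  simpa using hterm

/-- If no rotation of the word ever allowed a reduction to a shorter word, then all the vectors
`c⁻ᵐ x` would be nonnegative. -/
theorem hasCarrier_wordProd (hl : l.Nodup) (hx : x ∈ nonnegSupported l) :
    HasCarrier cs (cs.wordProd l) x := by
  induction hn : l.length generalizing l x with
  | zero =>
    rw [List.length_eq_zero_iff] at hn
    subst hn
    obtain rfl : x = 0 := funext fun j => hx.2 j List.not_mem_nil
    exact hasCarrier_zero _
  | succ n ih =>
    by_contra hbad
    let P (l : List B) (x : B → ℝ) : Prop :=
      l.Nodup ∧ l.length = n + 1 ∧ x ∈ nonnegSupported l ∧ ¬ HasCarrier cs (cs.wordProd l) x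
    have hP (i l x) (h : P (i :: l) x) : P (l ++ [i]) (titsRep cs (cs.simple i) x) := by
      obtain ⟨hl, hn, hx, hbad⟩ := h
      have h0 : 0 ≤ titsRep cs (cs.simple i) x i := by
        by_contra! h0
        exact hbad (hasCarrier_of_tail hl h0 (ih (List.nodup_cons.1 hl).2
          (sub_smul_simpleRoot_mem_nonnegSupported hx) (by simpa using hn)))
      exact ⟨List.nodup_append_comm.1 hl, by simpa using hn,
        titsRep_simple_mem_nonnegSupported hx h0, fun h => hbad (hasCarrier_of_rotate hl h0 h)⟩
    have hpow := rotate_pow_induction hP ⟨hl, hn, hx, hbad⟩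
    obtain rfl := eq_zero_of_forall_pow_mem_nonnegSupported hl fun m => (hpow m).2.2.1
    exact hbad (hasCarrier_zero _)

end Rotation

/-! ### Meets and joins of noncrossing elements -/

section Generic

open PointedCone

variable {V : Type*} [AddCommGroup V] [Module ℝ V]

theorem mem_and_mem_of_add_smul_mem {U : Submodule ℝ V} {x y : V} {s t : ℝ} (hst : s ≠ t)
    (hs : x + s • y ∈ U) (ht : x + t • y ∈ U) : x ∈ U ∧ y ∈ U := by
  have hy : y ∈ U := by
    refine (Submodule.smul_mem_iff U (sub_ne_zero.2 hst)).1 ?_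
    convert Submodule.sub_mem U hs ht using 1
    module
  exact ⟨(Submodule.add_mem_iff_left U (Submodule.smul_mem U s hy)).1 hs, hy⟩

theorem exists_mem_hull_forall_subset {ι : Type*} [Finite ι] {P : Set V} (hP : P.Finite)
    (U : ι → Submodule ℝ V) : ∃ x ∈ hull ℝ P, ∀ k, x ∈ U k → P ⊆ U k := by
  induction P, hP using Set.Finite.induction_on with
  | empty => exact ⟨0, zero_mem _, fun _ _ => Set.empty_subset _⟩
  | @insert y P _ _ ih =>
    obtain ⟨x, hx, hU⟩ := ih
    have hbad (k : {k // ¬ insert y P ⊆ (U k : Set V)}) : {t : ℝ | x + t • y ∈ U k}.Finite := by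
      refine Set.Subsingleton.finite fun s hs t ht => ?_
      by_contra hst
      obtain ⟨hxk, hyk⟩ := mem_and_mem_of_add_smul_mem hst hs ht
      exact k.2 (Set.insert_subset hyk (hU k hxk))
    obtain ⟨t, ht, htbad⟩ := (Set.Ici_infinite (0 : ℝ)).exists_notMem_finite
      (Set.finite_iUnion hbad)
    refine ⟨x + t • y, add_mem (Submodule.span_mono (Set.subset_insert _ _) hx)
      (PointedCone.smul_mem _ ht (subset_hull (Set.mem_insert _ _))), fun k hk => ?_⟩
    by_contra hkU
    exact htbad (Set.mem_iUnion.2 ⟨⟨k, hkU⟩, hk⟩)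

end Generic

section Lattice

variable {cs : CoxeterSystem M W} {γ u w : W}

/-- A parabolic Coxeter element: a conjugate of a product of distinct simple reflections. -/
def IsParabolicCoxeterElement (cs : CoxeterSystem M W) (γ : W) : Prop :=
  ∃ (v : W) (l : List B), l.Nodup ∧ γ = v * cs.wordProd l * v⁻¹

theorem IsCoxeterElement.isParabolicCoxeterElement [Fintype B] (h : IsCoxeterElement cs γ) :
    IsParabolicCoxeterElement cs γ := by
  obtain ⟨v, l, hl, -, rfl⟩ := h
  exact ⟨v, l, hl, rfl⟩

/-- The meet is the carrier of a generic vector in the cone of positive roots of the intersection of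
the two moved spaces. -/
theorem exists_meet_wordProd [Finite B] [Finite W] {l : List B} (hl : l.Nodup)
    (hu : rle cs u (cs.wordProd l)) (hw : rle cs w (cs.wordProd l)) :
    ∃ m, rle cs m u ∧ rle cs m w ∧ ∀ y, rle cs y u → rle cs y w → rle cs y m := by
  have := Fintype.ofFinite B
  set U := movedSpace (titsRep cs) u ⊓ movedSpace (titsRep cs) w
  have hfin : (posRoots cs U).Finite :=
    finite_setOf_isRoot.subset fun β (hβ : β ∈ posRoots cs U) => hβ.1
  obtain ⟨x, hx, hgen⟩ := exists_mem_hull_forall_subset hfin fun v : W => movedSpace (titsRep cs) v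
  obtain ⟨m, hm, hxm, hmin⟩ := hasCarrier_wordProd (cs := cs) hl
    ⟨nonneg_of_mem_posCone hx, fun j hj => hu.apply_eq_zero hj (mem_of_mem_posCone hx).1⟩
  refine ⟨m, rle_of_movedSpace_le hm hu (hmin u hu (posCone_mono inf_le_left hx)),
    rle_of_movedSpace_le hm hw (hmin w hw (posCone_mono inf_le_right hx)), fun y hyu hyw => ?_⟩
  refine rle_of_movedSpace_le (hyu.trans hu) hm
    ((movedSpace_le_span_posRoots y).trans (Submodule.span_le.2 fun β hβ => ?_))
  exact hgen m hxm ⟨hβ.1, hβ.2.1, hyu.movedSpace_le hβ.2.2, hyw.movedSpace_le hβ.2.2⟩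

theorem IsParabolicCoxeterElement.exists_meet [Finite B] [Finite W]
    (hγ : IsParabolicCoxeterElement cs γ) (hu : rle cs u γ) (hw : rle cs w γ) :
    ∃ m, rle cs m u ∧ rle cs m w ∧ ∀ y, rle cs y u → rle cs y w → rle cs y m := by
  obtain ⟨v, l, hl, rfl⟩ := hγ
  have hconj (a : W) : ∃ a', a = v * a' * v⁻¹ := ⟨v⁻¹ * a * v, by group⟩
  obtain ⟨u, rfl⟩ := hconj u
  obtain ⟨w, rfl⟩ := hconj w
  rw [rle_conj_iff] at hu hw
  obtain ⟨m, hmu, hmw, hm⟩ := exists_meet_wordProd hl hu hw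
  refine ⟨v * m * v⁻¹, hmu.conj v, hmw.conj v, fun y hyu hyw => ?_⟩
  obtain ⟨y, rfl⟩ := hconj y
  rw [rle_conj_iff] at hyu hyw ⊢
  exact hm y hyu hyw

theorem rle_mul_inv_of_rle_inv_mul {m : W} (hu : rle cs u γ) (h : rle cs m (u⁻¹ * γ)) :
    rle cs u (γ * m⁻¹) := by
  rw [← rle_conj_iff γ⁻¹]
  convert h.inv_mul_rle_inv_mul hu.inv_mul_rle using 1 <;> group

theorem mul_inv_rle_of_inv_mul_rle {m : W} (hm : rle cs m γ) (h : rle cs (u⁻¹ * γ) m) :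
    rle cs (γ * m⁻¹) u := by
  rw [← rle_conj_iff γ⁻¹]
  convert h.inv_mul_rle_inv_mul hm using 1 <;> group

/-- The anti-automorphism `x ↦ x⁻¹ * γ` of the interval turns meets into joins. -/
theorem IsParabolicCoxeterElement.exists_isIntervalLUB [Finite B] [Finite W]
    (hγ : IsParabolicCoxeterElement cs γ) (hu : rle cs u γ) (hw : rle cs w γ) :
    ∃ p, IsIntervalLUB cs γ {u, w} p := by
  obtain ⟨m, hmu, hmw, hm⟩ := hγ.exists_meet hu.inv_mul_rle hw.inv_mul_rle
  have hmγ := hmu.trans hu.inv_mul_rle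
  refine ⟨γ * m⁻¹, hmγ.mul_inv_rle, ?_, fun r hr h => ?_⟩
  · rintro x (rfl | rfl)
    · exact rle_mul_inv_of_rle_inv_mul hu hmu
    · exact rle_mul_inv_of_rle_inv_mul hw hmw
  · exact mul_inv_rle_of_inv_mul_rle hmγ (hm _ ((h u (by simp)).inv_mul_rle_inv_mul hr)
      ((h w (by simp)).inv_mul_rle_inv_mul hr))

end Lattice

/-! ### The positive monoid -/

section PositiveMonoid

variable {cs : CoxeterSystem M W} {γ a b c p u w x y z : W}

theorem rle.inv_mul_rle_of_rle (hab : rle cs a b) (hb : rle cs b γ) : rle cs (a⁻¹ * b) γ :=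
  ((inv_mul_rle_inv_mul_iff hab (hab.trans hb)).2 hb).trans (hab.trans hb).inv_mul_rle

theorem pgen_one : pgen cs γ 1 = 1 := by simp [pgen]

theorem pgen_coe (g : NCGen cs γ) : pgen cs γ (g : W) = PresentedMonoid.of (posRels cs γ) g := by
  rw [pgen, dif_pos g.2]

theorem pgen_mul (ha : rle cs a (a * b)) (hab : rle cs (a * b) γ) :
    pgen cs γ a * pgen cs γ b = pgen cs γ (a * b) := by
  by_cases ha1 : a = 1
  · rw [ha1, pgen_one, one_mul, one_mul]
  by_cases hb1 : b = 1
  · rw [hb1, pgen_one, mul_one, mul_one]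
  have hlen : rlen cs a + rlen cs b = rlen cs (a * b) := by
    simpa [rle] using ha.symm
  have hab1 : a * b ≠ 1 := fun h => by
    rw [h, rlen_one] at hlen
    exact ha1 (eq_one_of_rlen_eq_zero (cs := cs) (by omega))
  have hb : rle cs b γ := by simpa using ha.inv_mul_rle_of_rle hab
  have hmk := PresentedMonoid.mk_eq_mk_of_rel (rels := posRels cs γ)
    ⟨⟨a, ha1, ha.trans hab⟩, ⟨b, hb1, hb⟩, ⟨a * b, hab1, hab⟩, rfl, rfl, rfl, hlen⟩
  rw [pgen_coe ⟨a, ha1, ha.trans hab⟩, pgen_coe ⟨b, hb1, hb⟩, pgen_coe ⟨a * b, hab1, hab⟩]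
  exact hmk

theorem pgen_inv_mul_mul_pgen_inv_mul (hab : rle cs a b) (hbc : rle cs b c) (hc : rle cs c γ) :
    pgen cs γ (a⁻¹ * b) * pgen cs γ (b⁻¹ * c) = pgen cs γ (a⁻¹ * c) := by
  have hprod : a⁻¹ * b * (b⁻¹ * c) = a⁻¹ * c := by group
  have hac := hab.trans hbc
  rw [pgen_mul, hprod] <;> rw [hprod]
  exacts [(inv_mul_rle_inv_mul_iff hab hac).2 hbc, hac.inv_mul_rle_of_rle hc]

/-- The length homomorphism `Γ₊ → ℕ`, sending `⟨w⟩` to the reflection length of `w`; the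
relations of `Γ₊` are homogeneous. -/
noncomputable def weight (cs : CoxeterSystem M W) (γ : W) :
    PosMonoid cs γ →* Multiplicative ℕ :=
  PresentedMonoid.lift (fun g : NCGen cs γ => Multiplicative.ofAdd (rlen cs (g : W))) (by
    rintro _ _ ⟨w₁, w₂, w₃, rfl, rfl, -, hlen⟩
    simp [← hlen])

theorem weight_of_pos (g : NCGen cs γ) :
    0 < (weight cs γ (PresentedMonoid.mk (posRels cs γ) (FreeMonoid.of g))).toAdd :=
  Nat.pos_of_ne_zero fun h : rlen cs (g : W) = 0 => g.2.1 (eq_one_of_rlen_eq_zero h)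

/-- Every two elements of `[1, γ]` have a join in `[1, γ]`. -/
def HasIntervalJoins (cs : CoxeterSystem M W) (γ : W) : Prop :=
  ∀ u w, rle cs u γ → rle cs w γ → ∃ p, IsIntervalLUB cs γ {u, w} p

theorem isIntervalLUB_pair :
    IsIntervalLUB cs γ {u, w} p ↔ rle cs p γ ∧ rle cs u p ∧ rle cs w p ∧
      ∀ r, rle cs r γ → rle cs u r → rle cs w r → rle cs p r := by
  simp [IsIntervalLUB, and_assoc]

theorem isIntervalLUB_of_rle (huw : rle cs u w) (hw : rle cs w γ) :
    IsIntervalLUB cs γ {u, w} w :=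
  isIntervalLUB_pair.2 ⟨hw, huw, rle_refl w, fun _ _ _ hr => hr⟩

theorem IsIntervalLUB.rle_of_inv_mul (ha : rle cs x a) (haγ : rle cs a γ) (hb : rle cs x b)
    (hbγ : rle cs b γ) (h : IsIntervalLUB cs γ {x⁻¹ * a, x⁻¹ * b} (x⁻¹ * z)) :
    rle cs z γ ∧ rle cs a z ∧ rle cs b z := by
  obtain ⟨-, haz, hbz, hmin⟩ := isIntervalLUB_pair.1 h
  have hx := ha.trans haγ
  have hle : rle cs (x⁻¹ * z) (x⁻¹ * γ) := hmin _ hx.inv_mul_rle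
    ((inv_mul_rle_inv_mul_iff ha hx).2 haγ) ((inv_mul_rle_inv_mul_iff hb hx).2 hbγ)
  obtain ⟨hxz, hzγ⟩ := rle_mul_of_rle_inv_mul hx hle
  rw [mul_inv_cancel_left] at hxz hzγ
  exact ⟨hzγ, (inv_mul_rle_inv_mul_iff ha hxz).1 haz, (inv_mul_rle_inv_mul_iff hb hxz).1 hbz⟩

/-- The conclusion of the theorem for the equation `⟨u⟩A = ⟨w⟩D`: the tails `A` and `D` are
obtained from a common `C` by completing `u` and `w` to their join `p`. -/
def Completes (cs : CoxeterSystem M W) (γ u w : W) (A D : PosMonoid cs γ) : Prop :=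
  ∃ (p : W) (C : PosMonoid cs γ), IsIntervalLUB cs γ {u, w} p ∧
    A = pgen cs γ (u⁻¹ * p) * C ∧ D = pgen cs γ (w⁻¹ * p) * C

namespace Completes

variable {A D E : PosMonoid cs γ}

theorem symm (h : Completes cs γ u w A D) : Completes cs γ w u D A := by
  obtain ⟨p, C, hp, hA, hD⟩ := h
  exact ⟨p, C, Set.pair_comm u w ▸ hp, hD, hA⟩

theorem of_rle (huw : rle cs u w) (hw : rle cs w γ) (D : PosMonoid cs γ) :
    Completes cs γ u w (pgen cs γ (u⁻¹ * w) * D) D :=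
  ⟨w, D, isIntervalLUB_of_rle huw hw, rfl, by rw [inv_mul_cancel, pgen_one, one_mul]⟩

theorem of_upper_bound (hp : IsIntervalLUB cs γ {u, w} p) (huz : rle cs u z) (hwz : rle cs w z)
    (hz : rle cs z γ) (C : PosMonoid cs γ) :
    Completes cs γ u w (pgen cs γ (u⁻¹ * z) * C) (pgen cs γ (w⁻¹ * z) * C) := by
  obtain ⟨-, hup, hwp, hmin⟩ := isIntervalLUB_pair.1 hp
  have hpz := hmin z hz huz hwz
  refine ⟨p, pgen cs γ (p⁻¹ * z) * C, hp, ?_, ?_⟩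
  · rw [← mul_assoc, pgen_inv_mul_mul_pgen_inv_mul hup hpz hz]
  · rw [← mul_assoc, pgen_inv_mul_mul_pgen_inv_mul hwp hpz hz]

theorem mul_right (h : Completes cs γ u w A D) (E : PosMonoid cs γ) :
    Completes cs γ u w (A * E) (D * E) := by
  obtain ⟨p, C, hp, rfl, rfl⟩ := h
  exact ⟨p, C * E, hp, mul_assoc _ _ _, mul_assoc _ _ _⟩

end Completes

/-- The theorem for all equations `⟨u⟩A = ⟨w⟩D` between elements of weight less than `N`. -/
def CompletesBelow (cs : CoxeterSystem M W) (γ : W) (N : ℕ) : Prop :=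
  ∀ (u w : W) (A D : PosMonoid cs γ), rle cs u γ → rle cs w γ →
    pgen cs γ u * A = pgen cs γ w * D →
    (weight cs γ (pgen cs γ u * A)).toAdd < N → Completes cs γ u w A D

/-- From `⟨u⟩A = ⟨x⟩D = ⟨w⟩E`, the two factorizations of the lighter element `D` are compared; this
yields an upper bound `z` of `u` and `w` through which both tails factor. -/
theorem Completes.trans {A D E : PosMonoid cs γ} {N : ℕ} (hN : CompletesBelow cs γ N)
    (hp : IsIntervalLUB cs γ {u, w} p) (huD : Completes cs γ u x A D)
    (hDw : Completes cs γ x w D E) (hD : (weight cs γ D).toAdd < N) :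
    Completes cs γ u w A E := by
  obtain ⟨p₁, C₁, hp₁, rfl, hD₁⟩ := huD
  obtain ⟨p₂, C₂, hp₂, hD₂, rfl⟩ := hDw
  obtain ⟨hγ₁, hu₁, hx₁, -⟩ := isIntervalLUB_pair.1 hp₁
  obtain ⟨hγ₂, hx₂, hw₂, -⟩ := isIntervalLUB_pair.1 hp₂
  obtain ⟨q, C, hq, rfl, rfl⟩ := hN _ _ C₁ C₂ (hx₁.inv_mul_rle_of_rle hγ₁)
    (hx₂.inv_mul_rle_of_rle hγ₂) (hD₁.symm.trans hD₂) (hD₁ ▸ hD)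
  obtain ⟨z, rfl⟩ : ∃ z, q = x⁻¹ * z := ⟨x * q, (inv_mul_cancel_left x q).symm⟩
  obtain ⟨hz, h₁z, h₂z⟩ := hq.rle_of_inv_mul hx₁ hγ₁ hx₂ hγ₂
  have hcancel (y : W) : (x⁻¹ * y)⁻¹ * (x⁻¹ * z) = y⁻¹ * z := by group
  rw [hcancel, hcancel, ← mul_assoc, ← mul_assoc, pgen_inv_mul_mul_pgen_inv_mul hu₁ h₁z hz,
    pgen_inv_mul_mul_pgen_inv_mul hw₂ h₂z hz]
  exact of_upper_bound hp (hu₁.trans h₁z) (hw₂.trans h₂z) hz C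

/-- Two words that are both empty, or whose first letters and tails satisfy `Completes`: the
invariant preserved by the rewriting of words with the relations of `Γ₊`. -/
def WordsComplete (cs : CoxeterSystem M W) (γ : W) (X Y : FreeMonoid (NCGen cs γ)) : Prop :=
  (X = 1 ∧ Y = 1) ∨ ∃ (u w : NCGen cs γ) (A D : FreeMonoid (NCGen cs γ)),
    X = FreeMonoid.of u * A ∧ Y = FreeMonoid.of w * D ∧
      Completes cs γ (u : W) (w : W) (PresentedMonoid.mk (posRels cs γ) A)
        (PresentedMonoid.mk (posRels cs γ) D)

theorem freeMonoid_of_mul_ne_one {α : Type*} (a : α) (X : FreeMonoid α) : FreeMonoid.of a * X ≠ 1 :=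
  List.cons_ne_nil a X

theorem freeMonoid_of_mul_inj {α : Type*} {a b : α} {X Y : FreeMonoid α} :
    FreeMonoid.of a * X = FreeMonoid.of b * Y ↔ a = b ∧ X = Y :=
  List.cons_eq_cons

namespace WordsComplete

variable {X Y Z X' Y' : FreeMonoid (NCGen cs γ)}

theorem of_posRels (h : posRels cs γ X Y) : WordsComplete cs γ X Y := by
  obtain ⟨w₁, w₂, w₃, rfl, rfl, hw, hlen⟩ := h
  have hw₂ : (w₁ : W)⁻¹ * w₃ = w₂ := inv_mul_eq_of_eq_mul hw.symm
  refine Or.inr ⟨w₁, w₃, FreeMonoid.of w₂, 1, rfl, (mul_one _).symm, ?_⟩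
  have hle : rle cs (w₁ : W) w₃ := by rw [rle, hw₂, hlen]
  have h := Completes.of_rle hle w₃.2.2 1
  rwa [hw₂, pgen_coe, mul_one] at h

theorem refl (X : FreeMonoid (NCGen cs γ)) : WordsComplete cs γ X X := by
  induction X using FreeMonoid.casesOn with
  | one => exact Or.inl ⟨rfl, rfl⟩
  | of_mul g A =>
    have h := Completes.of_rle (rle_refl (g : W)) g.2.2 (PresentedMonoid.mk (posRels cs γ) A)
    rw [inv_mul_cancel, pgen_one, one_mul] at h
    exact Or.inr ⟨g, g, A, A, rfl, rfl, h⟩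

theorem symm (h : WordsComplete cs γ X Y) : WordsComplete cs γ Y X := by
  rcases h with ⟨hX, hY⟩ | ⟨u, w, A, D, hX, hY, h⟩
  · exact Or.inl ⟨hY, hX⟩
  · exact Or.inr ⟨w, u, D, A, hY, hX, h.symm⟩

theorem trans {N : ℕ} (hγ : HasIntervalJoins cs γ) (hN : CompletesBelow cs γ N)
    (hY : (weight cs γ (PresentedMonoid.mk (posRels cs γ) Y)).toAdd ≤ N)
    (hXY : WordsComplete cs γ X Y) (hYZ : WordsComplete cs γ Y Z) : WordsComplete cs γ X Z := by
  rcases hXY with ⟨rfl, rfl⟩ | ⟨u, x, A, D, rfl, rfl, hu⟩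
  · exact hYZ
  rcases hYZ with ⟨hnil, -⟩ | ⟨x', w, D', E, heq, rfl, hw⟩
  · exact absurd hnil (freeMonoid_of_mul_ne_one x D)
  obtain ⟨rfl, rfl⟩ := freeMonoid_of_mul_inj.1 heq
  obtain ⟨p, hp⟩ := hγ u w u.2.2 w.2.2
  rw [map_mul, map_mul, toAdd_mul] at hY
  have := weight_of_pos x
  exact Or.inr ⟨u, w, A, E, rfl, rfl, hu.trans hN hp hw (by omega)⟩

theorem mul (hX : WordsComplete cs γ X Y) (hX' : WordsComplete cs γ X' Y')
    (h : PresentedMonoid.mk (posRels cs γ) X' = PresentedMonoid.mk (posRels cs γ) Y') :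
    WordsComplete cs γ (X * X') (Y * Y') := by
  rcases hX with ⟨rfl, rfl⟩ | ⟨u, w, A, D, rfl, rfl, hu⟩
  · rwa [one_mul, one_mul]
  · refine Or.inr ⟨u, w, A * X', D * Y', mul_assoc _ _ _, mul_assoc _ _ _, ?_⟩
    rw [map_mul, map_mul, h]
    exact hu.mul_right _

theorem of_conGenRel {N : ℕ} (hγ : HasIntervalJoins cs γ) (hN : CompletesBelow cs γ N)
    (h : ConGen.Rel (posRels cs γ) X Y)
    (hX : (weight cs γ (PresentedMonoid.mk (posRels cs γ) X)).toAdd ≤ N) :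
    WordsComplete cs γ X Y := by
  induction h with
  | of X Y h => exact of_posRels h
  | refl X => exact refl X
  | symm hr ih =>
    rw [PresentedMonoid.mk_eq_mk_iff.2 hr] at ih
    exact (ih hX).symm
  | trans hr _ ih ih' =>
    have hY := hX
    rw [PresentedMonoid.mk_eq_mk_iff.2 hr] at hY
    exact trans hγ hN hY (ih hX) (ih' hY)
  | mul _ hr' ih ih' =>
    rw [map_mul, map_mul, toAdd_mul] at hX
    exact (ih (by omega)).mul (ih' (by omega)) (PresentedMonoid.mk_eq_mk_iff.2 hr')

end WordsComplete

theorem HasIntervalJoins.completesBelow (hγ : HasIntervalJoins cs γ) (N : ℕ) :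
    CompletesBelow cs γ N := by
  induction N with
  | zero => exact fun _ _ _ _ _ _ _ h => absurd h (Nat.not_lt_zero _)
  | succ N ih =>
    intro u w A D hu hw h hlt
    by_cases hu1 : u = 1
    · have h1 := Completes.of_rle (one_rle w) hw D
      rwa [inv_one, one_mul, ← h, hu1, pgen_one, one_mul, ← hu1] at h1
    by_cases hw1 : w = 1
    · have h1 := Completes.of_rle (one_rle u) hu A
      rw [inv_one, one_mul, h, hw1, pgen_one, one_mul, ← hw1] at h1
      exact h1.symm
    obtain ⟨A, rfl⟩ := PresentedMonoid.surjective_mk (rels := posRels cs γ) A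
    obtain ⟨D, rfl⟩ := PresentedMonoid.surjective_mk (rels := posRels cs γ) D
    rw [pgen_coe ⟨u, hu1, hu⟩] at h hlt
    rw [pgen_coe ⟨w, hw1, hw⟩] at h
    rcases WordsComplete.of_conGenRel hγ ih (X := FreeMonoid.of ⟨u, hu1, hu⟩ * A)
      (Y := FreeMonoid.of ⟨w, hw1, hw⟩ * D) (PresentedMonoid.mk_eq_mk_iff.1 h)
      (Nat.lt_succ_iff.1 hlt) with ⟨hnil, -⟩ | ⟨u', w', A', D', hX, hY, hcompl⟩
    · exact absurd hnil (freeMonoid_of_mul_ne_one _ A)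
    · obtain ⟨rfl, rfl⟩ := freeMonoid_of_mul_inj.1 hX
      obtain ⟨rfl, rfl⟩ := freeMonoid_of_mul_inj.1 hY
      exact hcompl

theorem HasIntervalJoins.exists_eq_pgen_mul (hγ : HasIntervalJoins cs γ) (hu : rle cs u γ)
    (hw : rle cs w γ) {A D : PosMonoid cs γ} (hAD : pgen cs γ u * A = pgen cs γ w * D) :
    ∃ e f : W, rle cs e γ ∧ rle cs f γ ∧ ∃ C : PosMonoid cs γ,
      A = pgen cs γ e * C ∧ D = pgen cs γ f * C ∧
      u * e = w * f ∧ IsIntervalLUB cs γ {u, w} (u * e) := by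
  obtain ⟨p, C, hp, hA, hD⟩ := hγ.completesBelow _ u w A D hu hw hAD (Nat.lt_succ_self _)
  obtain ⟨hpγ, hup, hwp, -⟩ := isIntervalLUB_pair.1 hp
  refine ⟨u⁻¹ * p, w⁻¹ * p, hup.inv_mul_rle_of_rle hpγ, hwp.inv_mul_rle_of_rle hpγ, C, hA, hD, ?_⟩
  rw [mul_inv_cancel_left, mul_inv_cancel_left]
  exact ⟨rfl, hp⟩

end PositiveMonoid

theorem left_prefix_join_general [Finite B] [Finite W] (cs : CoxeterSystem M W) (γ : W)
    (hγ : IsParabolicCoxeterElement cs γ) (u w : W) (hu : rle cs u γ) (hw : rle cs w γ)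
    (A C' : PosMonoid cs γ) (hAB : pgen cs γ u * A = pgen cs γ w * C') :
    ∃ e f : W, rle cs e γ ∧ rle cs f γ ∧ ∃ C : PosMonoid cs γ,
      A = pgen cs γ e * C ∧ C' = pgen cs γ f * C ∧
      u * e = w * f ∧ IsIntervalLUB cs γ {u, w} (u * e) :=
  HasIntervalJoins.exists_eq_pgen_mul (fun _ _ => hγ.exists_isIntervalLUB) hu hw hAB

/-- Left prefix lemma in the positive monoid (Brady's Lemma on positive words):
if `⟨u⟩A = ⟨w⟩B` then `A = ⟨e⟩C`, `B = ⟨f⟩C` with `ue = wf = u ∨ w`. -/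
theorem left_prefix_join [Fintype B] [Fintype W] (cs : CoxeterSystem M W) (γ : W)
    (hγ : IsCoxeterElement cs γ) (u w : W)
    (hu : u ≠ 1 ∧ rle cs u γ) (hw : w ≠ 1 ∧ rle cs w γ)
    (A C' : PosMonoid cs γ)
    (hAB : PresentedMonoid.of (posRels cs γ) ⟨u, hu⟩ * A =
           PresentedMonoid.of (posRels cs γ) ⟨w, hw⟩ * C') :
    ∃ e f : W, rle cs e γ ∧ rle cs f γ ∧ ∃ C : PosMonoid cs γ,
      A = pgen cs γ e * C ∧ C' = pgen cs γ f * C ∧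
      u * e = w * f ∧ IsIntervalLUB cs γ {u, w} (u * e) := by
  rw [← pgen_coe ⟨u, hu⟩, ← pgen_coe ⟨w, hw⟩] at hAB
  exact left_prefix_join_general cs γ hγ.isParabolicCoxeterElement u w hu.2 hw.2 A C' hAB
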